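/- arXiv:2403.07410 — 6 statements merged into one kernel-verified Lean document; each statement's English description precedes it below -/
import Mathlib

section
/- Let M be a finite set with |M| ≥ 32, let c ≥ 1 be a real number, and let J be a job set over M with |J| ≤ |M|^c. Let L and l be positive integers with L ≤ 2·|M|^c and l ≥ 150·c·ln|M| / ln ln|M|. Then for every positive integer s, the number of bad patterns for (J, L, l) of size s is at most 2·exp(|J|·ln(l)/8)·(e·C(J)/l)^s. -/
open Finset

/-- The congestion of the job set given by the finite type `J` with machine sequences
`seq : J → List M`: the maximum over machines `m` of the total number of pairs `(j,i)`
with `seq(j)_i = m`. -/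
def congestion {M J : Type*} [Fintype M] [DecidableEq M] [Fintype J]
    (seq : J → List M) : ℕ :=
  Finset.univ.sup fun m : M => ∑ j : J, (seq j).count m

/-- A bad pattern for the job set given by the finite type `J` with machine sequences
`seq : J → List M`, with parameters `L` and `l`. -/
def IsBadPattern {M J : Type*} [Fintype M] [Fintype J] (seq : J → List M)
    (L l : ℕ) (B : Fin (2 * L) → M → Finset (J × ℕ)) : Prop :=
  (∀ T m, ∀ p ∈ B T m, (seq p.1)[p.2]? = some m) ∧
  (∀ T m T' m', ∀ p ∈ B T m, ∀ p' ∈ B T' m', p.1 = p'.1 → T = T' ∧ m = m' ∧ p = p') ∧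
  (∀ T m, B T m = ∅ ∨ l < (B T m).card) ∧
  Fintype.card J < 2 * ∑ T, ∑ m, (B T m).card

/-!
More generally, count the patterns satisfying (i) and (iii). Weight a family of sets by `w ^ size`:
the generating function of all families factors over the `2L·|M|` slots `(T, m)`, so the number of
families of size `s` is at most `w⁻ˢ` times a product. A slot for `m` holds the empty set or more
than `l` of the at most `C` occurrences of `m`, and `C.choose k ≤ (e·C/k)^k`, so with
`w = l·y/(e·C)` its factor is at most `1 + ∑_{k>l} y^k`. For `y = l^(-1/8) ≤ 1/2` this is at most
`1 + y^l`, and `y^l` is so small that the whole product is at most `exp (1/2) ≤ 2`. Finally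
`w⁻ˢ = l^(s/8)·(e·C/l)^s`, and (ii) gives `s ≤ |J|`.
-/

section Estimates

theorem choose_le_exp_one_mul_div_pow (n k : ℕ) :
    (n.choose k : ℝ) ≤ (Real.exp 1 * n / k) ^ k := by
  rcases k.eq_zero_or_pos with rfl | hk
  · simp
  have pow_self_le : (k : ℝ) ^ k / k.factorial ≤ Real.exp 1 ^ k := by
    rw [Real.exp_one_pow]
    exact Real.pow_div_factorial_le_exp k k.cast_nonneg k
  calc (n.choose k : ℝ) ≤ n ^ k / k.factorial := Nat.choose_le_pow_div k n
    _ = k ^ k / k.factorial * (n / k : ℝ) ^ k := by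
      rw [div_pow]
      field_simp
    _ ≤ Real.exp 1 ^ k * (n / k : ℝ) ^ k := by gcongr
    _ = (Real.exp 1 * n / k) ^ k := by rw [← mul_pow, mul_div_assoc]

theorem exp_one_le_div_log {z : ℝ} (hz : 1 < z) : Real.exp 1 ≤ z / Real.log z := by
  rw [le_div_iff₀ (Real.log_pos hz)]
  simpa only [Real.exp_log (one_pos.trans hz)] using Real.exp_one_mul_le_exp (x := Real.log z)

theorem log_div_two_le_log_div_log {z : ℝ} (hz : 1 < z) :
    Real.log z / 2 ≤ Real.log (z / Real.log z) := by
  have log_z_pos : 0 < Real.log z := Real.log_pos hz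
  have two_mul_loglog_le : 2 * Real.log (Real.log z) ≤ Real.log z := by
    simpa only [Real.exp_log log_z_pos] using Real.two_mul_le_exp (x := Real.log (Real.log z))
  rw [Real.log_div (by positivity) log_z_pos.ne']
  linarith

theorem mul_div_two_le_mul_log {a z r : ℝ} (ha : 1 ≤ a) (hz : 1 < z)
    (hr : a * z / Real.log z ≤ r) : a * z / 2 ≤ r * Real.log r := by
  have log_z_pos : 0 < Real.log z := Real.log_pos hz
  have div_log_pos : 0 < z / Real.log z := by positivity
  rw [mul_div_assoc] at hr
  have div_log_le : z / Real.log z ≤ r := (le_mul_of_one_le_left div_log_pos.le ha).trans hr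
  calc a * z / 2 = a * (z / Real.log z) * (Real.log z / 2) := by field_simp
    _ ≤ r * Real.log r := by
      gcongr
      · exact div_log_pos.le.trans div_log_le
      · exact (log_div_two_le_log_div_log hz).trans (Real.log_le_log div_log_pos div_log_le)

theorem exp_neg_log_div_eight_le_half {r : ℝ} (hr : 256 ≤ r) :
    Real.exp (-(Real.log r / 8)) ≤ 1 / 2 := by
  have log_256 : Real.log 256 = 8 * Real.log 2 := by
    rw [show (256 : ℝ) = 2 ^ 8 by norm_num, Real.log_pow, Nat.cast_ofNat]
  have log_le : Real.log 256 ≤ Real.log r := Real.log_le_log (by norm_num) hr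
  rw [← Real.le_log_iff_exp_le (by norm_num), one_div, Real.log_inv]
  linarith

theorem pow_succ_div_one_sub_le_pow {y : ℝ} (hy0 : 0 ≤ y) (hy : y ≤ 1 / 2) (l : ℕ) :
    y ^ (l + 1) / (1 - y) ≤ y ^ l := by
  rw [div_le_iff₀ (by linarith), pow_succ]
  gcongr
  linarith

theorem one_lt_log_of_three_le {n : ℝ} (hn : 3 ≤ n) : 1 < Real.log n := by
  rw [Real.lt_log_iff_exp_lt (by linarith)]
  exact Real.exp_one_lt_three.trans_le hn

theorem ge_256_of_mul_div_log_le {c z r : ℝ} (hc : 1 ≤ c) (hz : 1 < z)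
    (hr : 150 * c * z / Real.log z ≤ r) : 256 ≤ r := by
  calc (256 : ℝ) ≤ 150 * 1 * Real.exp 1 := by linarith [Real.exp_one_gt_d9]
    _ ≤ 150 * c * (z / Real.log z) := by
      gcongr
      exact exp_one_le_div_log hz
    _ ≤ r := by rwa [← mul_div_assoc]

theorem mul_mul_exp_neg_log_div_eight_pow_le {n c t : ℝ} {l : ℕ} (hn : 3 ≤ n) (hc : 1 ≤ c)
    (ht : t ≤ 4 * n ^ c) (hl : 150 * c * Real.log n / Real.log (Real.log n) ≤ l) :
    t * n * Real.exp (-(Real.log l / 8)) ^ l ≤ 1 / 2 := by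
  have log_n_gt := one_lt_log_of_three_le hn
  have mul_log_ge := mul_div_two_le_mul_log (by linarith) log_n_gt hl
  have n_le : n ≤ n ^ c := Real.self_le_rpow_of_one_le (by linarith) hc
  have pow_le : Real.exp (-(Real.log l / 8)) ^ l ≤ ((n ^ c) ^ 4)⁻¹ := by
    rw [Real.rpow_def_of_pos (by linarith), ← Real.exp_nat_mul, ← Real.exp_nat_mul,
      ← Real.exp_neg, Real.exp_le_exp]
    push_cast
    nlinarith
  calc t * n * Real.exp (-(Real.log l / 8)) ^ l
      ≤ 4 * n ^ c * n ^ c * ((n ^ c) ^ 4)⁻¹ := by gcongr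
    _ = 4 / (n ^ c) ^ 2 := by field_simp
    _ ≤ 1 / 2 := by
      rw [div_le_div_iff₀ (by positivity) two_pos]
      nlinarith

theorem exp_mul_mul_tail_le_two {n c t : ℝ} {l : ℕ} (ht0 : 0 ≤ t) (ht : t ≤ 4 * n ^ c)
    (hn : 3 ≤ n) (hc : 1 ≤ c) (hl : 150 * c * Real.log n / Real.log (Real.log n) ≤ l) :
    Real.exp (t * n * (Real.exp (-(Real.log l / 8)) ^ (l + 1) /
      (1 - Real.exp (-(Real.log l / 8))))) ≤ 2 := by
  have l_ge : (256 : ℝ) ≤ l := ge_256_of_mul_div_log_le hc (one_lt_log_of_three_le hn) hl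
  set y := Real.exp (-(Real.log l / 8))
  have y_le : y ≤ 1 / 2 := exp_neg_log_div_eight_le_half l_ge
  rw [← Real.le_log_iff_exp_le two_pos]
  calc t * n * (y ^ (l + 1) / (1 - y)) ≤ t * n * y ^ l := by
        gcongr
        exact pow_succ_div_one_sub_le_pow (Real.exp_nonneg _) y_le l
    _ ≤ 1 / 2 := mul_mul_exp_neg_log_div_eight_pow_le hn hc ht hl
    _ ≤ Real.log 2 := by linarith [Real.log_two_gt_d9]

end Estimates

section HeavyFamilies

theorem card_filter_sum_eq_mul_pow_le_prod_sum {κ β R : Type*} [Fintype κ] [DecidableEq κ]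
    [CommSemiring R] [PartialOrder R] [IsOrderedRing R] (F : κ → Finset β) (size : β → ℕ) (s : ℕ)
    {w : R} (hw : 0 ≤ w) :
    #{B ∈ Fintype.piFinset F | ∑ i, size (B i) = s} * w ^ s ≤ ∏ i, ∑ b ∈ F i, w ^ size b := by
  calc #{B ∈ Fintype.piFinset F | ∑ i, size (B i) = s} * w ^ s
      = ∑ B ∈ Fintype.piFinset F with ∑ i, size (B i) = s, ∏ i, w ^ size (B i) := by
        rw [← nsmul_eq_mul, ← sum_const]
        refine sum_congr rfl fun B hB => ?_
        rw [prod_pow_eq_pow_sum, (mem_filter.1 hB).2]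
    _ ≤ ∑ B ∈ Fintype.piFinset F, ∏ i, w ^ size (B i) :=
        sum_le_sum_of_subset_of_nonneg (filter_subset _ _)
          fun _ _ _ => prod_nonneg fun _ _ => pow_nonneg hw _
    _ = ∏ i, ∑ b ∈ F i, w ^ size b := (prod_univ_sum F fun _ b => w ^ size b).symm

variable {κ α : Type*}

/-- The subsets of `P` that are empty or have more than `l` elements: the values that condition
(iii) on a bad pattern allows when the candidates are `P`. -/
def heavySubsets (P : Finset α) (l : ℕ) : Finset (Finset α) :=
  {A ∈ P.powerset | #A = 0 ∨ l < #A}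

theorem mem_heavySubsets {P A : Finset α} {l : ℕ} :
    A ∈ heavySubsets P l ↔ A ⊆ P ∧ (A = ∅ ∨ l < #A) := by
  rw [heavySubsets, mem_filter, mem_powerset, card_eq_zero]

theorem sum_pow_card_heavySubsets_eq (P : Finset α) (l : ℕ) (w : ℝ) :
    ∑ A ∈ heavySubsets P l, w ^ #A =
      1 + ∑ k ∈ Ico (l + 1) (#P + 1), ((#P).choose k : ℝ) * w ^ k := by
  have sizes_eq : {k ∈ range (#P + 1) | k = 0 ∨ l < k} = insert 0 (Ico (l + 1) (#P + 1)) := by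
    ext k
    simp only [mem_filter, mem_range, mem_insert, mem_Ico]
    omega
  rw [heavySubsets, sum_filter,
    sum_powerset_apply_card fun k => if k = 0 ∨ l < k then w ^ k else 0]
  simp only [nsmul_eq_mul, mul_ite, mul_zero]
  rw [← sum_filter, sizes_eq, sum_insert (by simp), Nat.choose_zero_right, Nat.cast_one, pow_zero,
    one_mul]

theorem sum_pow_card_heavySubsets_le {P : Finset α} {l : ℕ} {w y : ℝ} (hw : 0 ≤ w) (hy0 : 0 ≤ y)
    (hy1 : y < 1) (hP : Real.exp 1 * #P * w ≤ l * y) :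
    ∑ A ∈ heavySubsets P l, w ^ #A ≤ 1 + y ^ (l + 1) / (1 - y) := by
  have term_le : ∀ k ∈ Ico (l + 1) (#P + 1), ((#P).choose k : ℝ) * w ^ k ≤ y ^ k := by
    intro k hk
    have l_lt_k : l < k := (mem_Ico.1 hk).1
    have k_pos : 0 < k := l.zero_le.trans_lt l_lt_k
    calc ((#P).choose k : ℝ) * w ^ k ≤ (Real.exp 1 * #P / k) ^ k * w ^ k := by
          gcongr
          exact choose_le_exp_one_mul_div_pow _ _
      _ = (Real.exp 1 * #P * w / k) ^ k := by rw [← mul_pow, div_mul_eq_mul_div]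
      _ ≤ (k * y / k) ^ k := by
          have numerator_le : Real.exp 1 * #P * w ≤ k * y := hP.trans (by gcongr)
          gcongr
      _ = y ^ k := by rw [mul_div_cancel_left₀ y (by positivity)]
  rw [sum_pow_card_heavySubsets_eq]
  gcongr
  exact (sum_le_sum term_le).trans (geom_sum_Ico_le_of_lt_one hy0 hy1)

variable [Fintype κ] [DecidableEq κ]

/-- The families of total size `s` picking a heavy subset of `P i` at every index `i`. -/
def heavyFamilies (P : κ → Finset α) (l s : ℕ) : Finset (κ → Finset α) :=
  {B ∈ Fintype.piFinset fun i => heavySubsets (P i) l | ∑ i, #(B i) = s}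

theorem mem_heavyFamilies {P : κ → Finset α} {l s : ℕ} {B : κ → Finset α} :
    B ∈ heavyFamilies P l s ↔ (∀ i, B i ∈ heavySubsets (P i) l) ∧ ∑ i, #(B i) = s := by
  rw [heavyFamilies, mem_filter, Fintype.mem_piFinset]

theorem card_heavyFamilies_mul_pow_le {P : κ → Finset α} {l : ℕ} (s : ℕ) {w y : ℝ} (hw : 0 ≤ w)
    (hy0 : 0 ≤ y) (hy1 : y < 1) (hP : ∀ i, Real.exp 1 * #(P i) * w ≤ l * y) :
    #(heavyFamilies P l s) * w ^ s ≤
      Real.exp (Fintype.card κ * (y ^ (l + 1) / (1 - y))) := by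
  have tail_nonneg : 0 ≤ y ^ (l + 1) / (1 - y) := div_nonneg (by positivity) (by linarith)
  calc #(heavyFamilies P l s) * w ^ s ≤ ∏ i, ∑ A ∈ heavySubsets (P i) l, w ^ #A :=
        card_filter_sum_eq_mul_pow_le_prod_sum _ card s hw
    _ ≤ ∏ _i : κ, (1 + y ^ (l + 1) / (1 - y)) :=
        prod_le_prod (fun _ _ => sum_nonneg fun _ _ => by positivity)
          fun i _ => sum_pow_card_heavySubsets_le hw hy0 hy1 (hP i)
    _ ≤ Real.exp (∑ _i : κ, y ^ (l + 1) / (1 - y)) :=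
        Real.prod_one_add_le_exp_sum univ fun _ => tail_nonneg
    _ = Real.exp (Fintype.card κ * (y ^ (l + 1) / (1 - y))) := by
        rw [sum_const, card_univ, nsmul_eq_mul]

theorem le_card_mul_of_mem_heavyFamilies {P : κ → Finset α} {C l s : ℕ} {B : κ → Finset α}
    (hP : ∀ i, #(P i) ≤ C) (hB : B ∈ heavyFamilies P l s) : s ≤ Fintype.card κ * C := by
  obtain ⟨B_heavy, rfl⟩ := mem_heavyFamilies.1 hB
  exact sum_le_card_nsmul _ _ _ fun i _ =>
    (card_le_card (mem_heavySubsets.1 (B_heavy i)).1).trans (hP i)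

theorem card_heavyFamilies_le {P : κ → Finset α} {C l : ℕ} (s : ℕ) {y : ℝ}
    (hP : ∀ i, #(P i) ≤ C) (hl : 0 < l) (hy0 : 0 < y) (hy1 : y < 1) :
    (#(heavyFamilies P l s) : ℝ) ≤
      Real.exp (Fintype.card κ * (y ^ (l + 1) / (1 - y))) * (Real.exp 1 * C / (l * y)) ^ s := by
  obtain families_empty | ⟨B, hB⟩ := (heavyFamilies P l s).eq_empty_or_nonempty
  · rw [families_empty, card_empty, Nat.cast_zero]
    positivity
  have base_pow_ne_zero : (Real.exp 1 * C / (l * y)) ^ s ≠ 0 := by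
    rcases C.eq_zero_or_pos with rfl | C_pos
    · rw [Nat.le_zero.1 (le_card_mul_of_mem_heavyFamilies hP hB), pow_zero]
      exact one_ne_zero
    · positivity
  have weight_le : ∀ i, Real.exp 1 * #(P i) * (Real.exp 1 * C / (l * y))⁻¹ ≤ l * y := by
    intro i
    calc Real.exp 1 * #(P i) * (Real.exp 1 * C / (l * y))⁻¹
        = l * y * (Real.exp 1 * #(P i) / (Real.exp 1 * C)) := by rw [inv_div]; ring
      _ ≤ l * y := by
        refine mul_le_of_le_one_right (by positivity) (div_le_one_of_le₀ ?_ (by positivity))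
        gcongr
        exact hP i
  rw [← div_le_iff₀ (by positivity), div_eq_mul_inv, ← inv_pow]
  exact card_heavyFamilies_mul_pow_le s (by positivity) hy0.le hy1 weight_le

end HeavyFamilies

section Patterns

variable {ι M J : Type*}

/-- Conditions (i) and (iii) of a bad pattern, with the `2L` values of `T` replaced by an arbitrary
index type. -/
def IsHeavyPattern (seq : J → List M) (l : ℕ) (B : ι → M → Finset (J × ℕ)) : Prop :=
  (∀ T m, ∀ p ∈ B T m, (seq p.1)[p.2]? = some m) ∧ ∀ T m, B T m = ∅ ∨ l < #(B T m)

theorem IsBadPattern.isHeavyPattern [Fintype M] [Fintype J] {seq : J → List M} {L l : ℕ}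
    {B : Fin (2 * L) → M → Finset (J × ℕ)} (hB : IsBadPattern seq L l B) :
    IsHeavyPattern seq l B :=
  ⟨hB.1, hB.2.2.1⟩

theorem IsBadPattern.sum_card_le_card [Fintype M] [Fintype J] {seq : J → List M} {L l : ℕ}
    {B : Fin (2 * L) → M → Finset (J × ℕ)} (hB : IsBadPattern seq L l B) :
    ∑ T, ∑ m, #(B T m) ≤ Fintype.card J := by
  rw [← Fintype.sum_prod_type' fun T m => #(B T m), ← card_sigma]
  refine card_le_card_of_injOn (fun x => x.2.1) (fun _ _ => mem_univ _) ?_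
  rintro ⟨⟨T, m⟩, p⟩ hp ⟨⟨T', m'⟩, p'⟩ hp' same_job
  obtain ⟨rfl, rfl, rfl⟩ :=
    hB.2.1 T m T' m' p (mem_sigma.1 hp).2 p' (mem_sigma.1 hp').2 same_job
  rfl

variable [Fintype J] [DecidableEq M]

/-- The pairs `(j, i)` with `seq(j)_i = m`. -/
def occurrences (seq : J → List M) (m : M) : Finset (J × ℕ) :=
  (univ.sigma fun j => ((seq j).idxsOf m).toFinset).map (Equiv.sigmaEquivProd J ℕ).toEmbedding

theorem mem_occurrences {seq : J → List M} {m : M} {p : J × ℕ} :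
    p ∈ occurrences seq m ↔ (seq p.1)[p.2]? = some m := by
  simp [occurrences, mem_map_equiv, List.getElem?_eq_some_iff]

variable [Fintype M]

theorem card_occurrences_le_congestion (seq : J → List M) (m : M) :
    #(occurrences seq m) ≤ congestion seq := by
  calc #(occurrences seq m) = ∑ j, #((seq j).idxsOf m).toFinset := by
        rw [occurrences, card_map, card_sigma]
    _ ≤ ∑ j, (seq j).count m :=
        sum_le_sum fun j _ => (List.toFinset_card_le _).trans_eq List.length_idxsOf
    _ ≤ congestion seq := le_sup (f := fun m => ∑ j, (seq j).count m) (mem_univ m)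

variable [Fintype ι] [DecidableEq ι]

/-- Heavy patterns of size `s`, uncurried, are the heavy families of occurrences on the slots
`(T, m)`. -/
def heavyPatternsEquiv (seq : J → List M) (l s : ℕ) :
    {B : ι → M → Finset (J × ℕ) // IsHeavyPattern seq l B ∧ ∑ T, ∑ m, #(B T m) = s} ≃
      heavyFamilies (fun x : ι × M => occurrences seq x.2) l s :=
  (Equiv.curry ι M (Finset (J × ℕ))).symm.subtypeEquiv fun B => by
    simp [mem_heavyFamilies, mem_heavySubsets, IsHeavyPattern, subset_iff, mem_occurrences,
      Fintype.sum_prod_type, forall_and]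

end Patterns

theorem natCard_badPatterns_le_natCard_heavyPatterns {M J : Type*} [Fintype M] [Fintype J]
    (seq : J → List M) (L l s : ℕ) :
    Nat.card {B : Fin (2 * L) → M → Finset (J × ℕ) //
        IsBadPattern seq L l B ∧ ∑ T, ∑ m, #(B T m) = s} ≤
      Nat.card {B : Fin (2 * L) → M → Finset (J × ℕ) //
        IsHeavyPattern seq l B ∧ ∑ T, ∑ m, #(B T m) = s} := by
  classical
  have := Finite.of_equiv _ (heavyPatternsEquiv (ι := Fin (2 * L)) seq l s).symm
  exact Nat.card_le_card_of_injective _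
    (Subtype.map_injective (fun _ hB => ⟨hB.1.isHeavyPattern, hB.2⟩) Function.injective_id)

theorem natCard_badPatterns_eq_zero_of_card_lt {M J : Type*} [Fintype M] [Fintype J]
    (seq : J → List M) (L l : ℕ) {s : ℕ} (hs : Fintype.card J < s) :
    Nat.card {B : Fin (2 * L) → M → Finset (J × ℕ) //
        IsBadPattern seq L l B ∧ ∑ T, ∑ m, #(B T m) = s} = 0 := by
  have : IsEmpty {B : Fin (2 * L) → M → Finset (J × ℕ) //
      IsBadPattern seq L l B ∧ ∑ T, ∑ m, #(B T m) = s} :=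
    ⟨fun B => hs.not_ge (B.2.2 ▸ B.2.1.sum_card_le_card)⟩
  exact Nat.card_of_isEmpty

theorem count_badPatterns_le_general {ι M J : Type*} [Fintype ι] [Fintype M] [DecidableEq M]
    [Fintype J] (seq : J → List M) (c : ℝ) (hc : 1 ≤ c) (hM : 3 ≤ Fintype.card M)
    (hι : (Fintype.card ι : ℝ) ≤ 4 * (Fintype.card M : ℝ) ^ c) (l : ℕ)
    (hl : 150 * c * Real.log (Fintype.card M) / Real.log (Real.log (Fintype.card M)) ≤ (l : ℝ))
    (s : ℕ) :
    (Nat.card {B : ι → M → Finset (J × ℕ) //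
        IsHeavyPattern seq l B ∧ ∑ T, ∑ m, #(B T m) = s} : ℝ) ≤
      2 * Real.exp (s * Real.log l / 8) * (Real.exp 1 * congestion seq / l) ^ s := by
  classical
  have three_le : (3 : ℝ) ≤ Fintype.card M := by exact_mod_cast hM
  have l_ge : (256 : ℝ) ≤ l :=
    ge_256_of_mul_div_log_le hc (one_lt_log_of_three_le three_le) hl
  have l_pos : 0 < l := by exact_mod_cast (by linarith : (0 : ℝ) < l)
  set y := Real.exp (-(Real.log l / 8)) with hy
  have y_lt_one : y < 1 := (exp_neg_log_div_eight_le_half l_ge).trans_lt (by norm_num)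
  have exp_le_two : Real.exp (Fintype.card (ι × M) * (y ^ (l + 1) / (1 - y))) ≤ 2 := by
    rw [Fintype.card_prod, Nat.cast_mul]
    exact exp_mul_mul_tail_le_two (Nat.cast_nonneg _) hι three_le hc hl
  have base_eq : Real.exp 1 * congestion seq / (l * y) =
      Real.exp (Real.log l / 8) * (Real.exp 1 * congestion seq / l) := by
    rw [hy, Real.exp_neg]
    field_simp
  rw [Nat.card_congr (heavyPatternsEquiv seq l s), Nat.card_eq_fintype_card, Fintype.card_coe]
  calc (#(heavyFamilies (fun x : ι × M => occurrences seq x.2) l s) : ℝ)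
      ≤ Real.exp (Fintype.card (ι × M) * (y ^ (l + 1) / (1 - y))) *
          (Real.exp 1 * congestion seq / (l * y)) ^ s :=
        card_heavyFamilies_le s (fun x => card_occurrences_le_congestion seq x.2) l_pos
          (Real.exp_pos _) y_lt_one
    _ ≤ 2 * (Real.exp (Real.log l / 8) * (Real.exp 1 * congestion seq / l)) ^ s := by
        rw [base_eq]
        gcongr
    _ = 2 * Real.exp (s * Real.log l / 8) * (Real.exp 1 * congestion seq / l) ^ s := by
        rw [mul_pow, ← Real.exp_nat_mul, mul_assoc, ← mul_div_assoc (s : ℝ)]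

/-- If `|M| ≥ 32`, `c ≥ 1`, `|J| ≤ |M|^c`, `L ≤ 2·|M|^c` and
`l ≥ 150·c·ln|M| / ln ln|M|`, then for every positive integer `s` the number of bad
patterns for `(J, L, l)` of size `s` is at most `2·exp(|J|·ln(l)/8)·(e·C(J)/l)^s`. -/
theorem count_badPatterns_le {M J : Type*} [Fintype M] [DecidableEq M] [Fintype J]
    (seq : J → List M) (c : ℝ) (hc : 1 ≤ c) (hM : 32 ≤ Fintype.card M)
    (hJ : (Fintype.card J : ℝ) ≤ (Fintype.card M : ℝ) ^ c)
    (L l : ℕ) (hL0 : 0 < L) (hl0 : 0 < l)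
    (hL : (L : ℝ) ≤ 2 * (Fintype.card M : ℝ) ^ c)
    (hl : 150 * c * Real.log (Fintype.card M) / Real.log (Real.log (Fintype.card M)) ≤ (l : ℝ))
    (s : ℕ) (hs : 0 < s) :
    (Nat.card {B : Fin (2 * L) → M → Finset (J × ℕ) //
        IsBadPattern seq L l B ∧ ∑ T, ∑ m, (B T m).card = s} : ℝ) ≤
      2 * Real.exp ((Fintype.card J : ℝ) * Real.log l / 8) *
        (Real.exp 1 * (congestion seq : ℝ) / (l : ℝ)) ^ s := by
  obtain s_le | card_lt := le_or_gt s (Fintype.card J)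
  · have hT : (Fintype.card (Fin (2 * L)) : ℝ) ≤ 4 * (Fintype.card M : ℝ) ^ c := by
      rw [Fintype.card_fin, Nat.cast_mul, Nat.cast_ofNat]
      linarith
    calc (Nat.card _ : ℝ) ≤ Nat.card _ := by
          exact_mod_cast natCard_badPatterns_le_natCard_heavyPatterns seq L l s
      _ ≤ _ := count_badPatterns_le_general seq c hc (by omega) hT l hl s
      _ ≤ _ := by gcongr
  · rw [natCard_badPatterns_eq_zero_of_card_lt seq L l card_lt, Nat.cast_zero]
    positivity
end

section
/- Let M be a finite set with |M| ≥ 32, let c ≥ 1 be a real number, let n be a positive integer with n ≤ |M|^c, and let L and l be positive integers with L ≤ 2·|M|^c and l ≥ 150·c·ln|M| / ln ln|M|. Then for every integer s with 1 ≤ s ≤ n, Σ_{k=1}^{⌊s/l⌋} binom(2·L·|M|, k)·binom(s+k, k) ≤ 2·exp(n·ln(l)/8). (An empty sum, when s < l, equals 0.) -/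
open Finset

/-!
The `k`-th summand is at most `B ^ k` for `B = 2 * L * |M| * (s + 1)`, so the sum is at most
`2 * B ^ (s / l)`. Since `B ≤ |M| ^ (5 * c)`, it remains to see that
`40 * c * log |M| ≤ l * log l`. With `x = log |M|`, the hypothesis is `l ≥ 150 * c * x / log x`;
as `log x ≤ √x`, this forces `l ≥ √x`, hence `log l ≥ log x / 2` and `l * log l ≥ 75 * c * x`.
-/

lemma sum_Icc_one_pow_le_two_mul_pow {b : ℕ} (hb : 2 ≤ b) (K : ℕ) :
    ∑ k ∈ Icc 1 K, b ^ k ≤ 2 * b ^ K := by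
  cases K with
  | zero => simp
  | succ K =>
    have hlt : ∑ k ∈ Icc 1 K, b ^ k < b ^ (K + 1) :=
      Nat.geomSum_lt hb fun k hk => Nat.lt_succ_of_le (mem_Icc.1 hk).2
    rw [sum_Icc_succ_top (by lia)]
    lia

lemma choose_mul_choose_add_le_pow (N s k : ℕ) :
    N.choose k * (s + k).choose k ≤ (N * (s + 1)) ^ k := by
  rw [mul_pow]
  exact Nat.mul_le_mul (Nat.choose_le_pow N k) (Nat.choose_add_le_add_one_pow s k)

lemma sum_choose_mul_choose_add_le {N s : ℕ} (hNs : 2 ≤ N * (s + 1)) (K : ℕ) :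
    ∑ k ∈ Icc 1 K, N.choose k * (s + k).choose k ≤ 2 * (N * (s + 1)) ^ K :=
  (sum_le_sum fun k _ => choose_mul_choose_add_le_pow N s k).trans
    (sum_Icc_one_pow_le_two_mul_pow hNs K)

lemma pow_div_le_exp_mul {b t : ℝ} (hb : 0 ≤ b) (ht : 0 ≤ t) {l : ℕ}
    (hbl : b ≤ Real.exp (l * t)) (s : ℕ) : b ^ (s / l) ≤ Real.exp (s * t) := by
  have hdiv : ((s / l : ℕ) : ℝ) * l ≤ s := mod_cast Nat.div_mul_le_self s l
  calc b ^ (s / l) ≤ Real.exp (l * t) ^ (s / l) := by gcongr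
    _ = Real.exp ((s / l : ℕ) * l * t) := by rw [← Real.exp_nat_mul, mul_assoc]
    _ ≤ Real.exp (s * t) := by gcongr

lemma log_le_sqrt {x : ℝ} (hx : 0 < x) : Real.log x ≤ √x := by
  have hexp : Real.exp 1 * (Real.log x / 2) ≤ √x := by
    simpa only [Real.exp_half, Real.exp_log hx] using
      Real.exp_one_mul_le_exp (x := Real.log x / 2)
  rcases le_total (Real.log x) 0 with hlog | hlog
  · exact hlog.trans (Real.sqrt_nonneg x)
  · nlinarith [Real.exp_one_gt_two]

lemma mul_le_two_mul_mul_log {a x y : ℝ} (ha : 1 ≤ a) (hx : 1 < x)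
    (hy : a * x / Real.log x ≤ y) : a * x ≤ 2 * (y * Real.log y) := by
  have hx0 : 0 < x := by linarith
  have hlog : 0 < Real.log x := Real.log_pos hx
  have hsqrt : √x ≤ y := by
    refine le_trans ?_ hy
    rw [le_div_iff₀ hlog]
    calc √x * Real.log x ≤ √x * √x := by gcongr; exact log_le_sqrt hx0
      _ = x := Real.mul_self_sqrt hx0.le
      _ ≤ a * x := le_mul_of_one_le_left hx0.le ha
  have hy0 : 0 < y := (Real.sqrt_pos.2 hx0).trans_le hsqrt
  have hlog_half : Real.log x / 2 ≤ Real.log y := by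
    rw [← Real.log_sqrt hx0.le]
    exact Real.log_le_log (Real.sqrt_pos.2 hx0) hsqrt
  calc a * x ≤ y * Real.log x := (div_le_iff₀ hlog).1 hy
    _ = 2 * (y * (Real.log x / 2)) := by ring
    _ ≤ 2 * (y * Real.log y) := by gcongr

lemma two_mul_mul_mul_add_one_le_rpow {m c L s : ℝ} (hm : 3 ≤ m) (hc : 1 ≤ c)
    (hL : L ≤ 2 * m ^ c) (hs0 : 0 ≤ s) (hs : s ≤ m ^ c) :
    2 * L * m * (s + 1) ≤ m ^ (5 * c) := by
  have hmc : m ≤ m ^ c := Real.self_le_rpow_of_one_le (by linarith) hc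
  have hsq : 8 ≤ (m ^ c) ^ 2 := by nlinarith
  calc 2 * L * m * (s + 1) ≤ 2 * (2 * m ^ c) * m ^ c * (m ^ c + m ^ c) := by
        gcongr; linarith
    _ = 8 * (m ^ c) ^ 3 := by ring
    _ ≤ (m ^ c) ^ 2 * (m ^ c) ^ 3 := by gcongr
    _ = m ^ (5 * c) := by
        rw [← pow_add, mul_comm 5 c, Real.rpow_mul (by linarith)]
        norm_cast

theorem sum_sizes_badPattern_le_general {m : ℕ} (hm : 3 ≤ m) {c : ℝ} (hc : 1 ≤ c)
    {L l s : ℕ} (hL0 : 0 < L) (hL : (L : ℝ) ≤ 2 * (m : ℝ) ^ c)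
    (hl : 150 * c * Real.log m / Real.log (Real.log m) ≤ (l : ℝ)) (hs : (s : ℝ) ≤ (m : ℝ) ^ c) :
    ((∑ k ∈ Icc 1 (s / l), (2 * L * m).choose k * (s + k).choose k : ℕ) : ℝ) ≤
      2 * Real.exp (s * Real.log l / 8) := by
  have hm3 : (3 : ℝ) ≤ m := mod_cast hm
  have hm0 : (0 : ℝ) < m := by linarith
  have hlog : 1 < Real.log m :=
    (Real.lt_log_iff_exp_lt hm0).2 (Real.exp_one_lt_three.trans_le hm3)
  have hllog : 150 * c * Real.log m ≤ 2 * (l * Real.log l) :=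
    mul_le_two_mul_mul_log (by linarith) hlog hl
  have hbase : (2 * L * m * (s + 1) : ℝ) ≤ Real.exp (l * (Real.log l / 8)) := by
    refine (two_mul_mul_mul_add_one_le_rpow hm3 hc hL s.cast_nonneg hs).trans ?_
    rw [Real.rpow_def_of_pos hm0, Real.exp_le_exp]
    have : 0 < c * Real.log m := by positivity
    linarith
  have hbase_two : 2 ≤ 2 * L * m * (s + 1) := by
    have : 0 < L * m * (s + 1) := by positivity
    lia
  calc ((∑ k ∈ Icc 1 (s / l), (2 * L * m).choose k * (s + k).choose k : ℕ) : ℝ)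
      ≤ 2 * (2 * L * m * (s + 1)) ^ (s / l) :=
        mod_cast sum_choose_mul_choose_add_le hbase_two (s / l)
    _ ≤ 2 * Real.exp (s * (Real.log l / 8)) := by
        gcongr
        exact pow_div_le_exp_mul (by positivity) (by positivity) hbase s
    _ = 2 * Real.exp (s * Real.log l / 8) := by rw [mul_div_assoc]

/-- Let `|M| ≥ 32`, `c ≥ 1`, `n ≤ |M|^c` a positive integer, and `L, l` positive integers
with `L ≤ 2·|M|^c` and `l ≥ 150·c·ln|M| / ln ln|M|`. Then for every integer `s` with
`1 ≤ s ≤ n`, `Σ_{k=1}^{⌊s/l⌋} binom(2·L·|M|, k)·binom(s+k, k) ≤ 2·exp(n·ln(l)/8)`. -/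
theorem sum_sizes_badPattern_le {M : Type*} [Fintype M]
    (c : ℝ) (hc : 1 ≤ c) (hM : 32 ≤ Fintype.card M)
    (n : ℕ) (hn : 0 < n) (hnM : (n : ℝ) ≤ (Fintype.card M : ℝ) ^ c)
    (L l : ℕ) (hL0 : 0 < L) (hl0 : 0 < l)
    (hL : (L : ℝ) ≤ 2 * (Fintype.card M : ℝ) ^ c)
    (hl : 150 * c * Real.log (Fintype.card M) / Real.log (Real.log (Fintype.card M)) ≤ (l : ℝ))
    (s : ℕ) (hs1 : 1 ≤ s) (hsn : s ≤ n) :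
    ((∑ k ∈ Finset.Icc 1 (s / l),
        Nat.choose (2 * L * Fintype.card M) k * Nat.choose (s + k) k : ℕ) : ℝ) ≤
      2 * Real.exp ((n : ℝ) * Real.log l / 8) := by
  have hs : (s : ℝ) ≤ n := mod_cast hsn
  exact (sum_sizes_badPattern_le_general (by lia) hc hL0 hL hl (hs.trans hnM)).trans (by gcongr)
end

section
/- Let n ≥ 1 be an integer and let C, L, l be real numbers with 1 ≤ C ≤ L and l ≥ 150. Then Σ_{s=⌈n/2⌉}^{n} 2·exp(n·ln(l)/8)·(e·C/l)^s·L^(−s) ≤ exp(−n·ln(l)/8). -/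
open Finset

/-!
As `C ≤ L`, each summand is at most `2 E (e / l) ^ s` with `E = l ^ (n / 8)`. The geometric tail
from `m = ⌈n / 2⌉` costs only a factor `1 / (1 - e / l)`, and the `E ^ 2 = l ^ (n / 4) ≤ √l ^ m`
needed to turn `E` into `E⁻¹` is absorbed by half of the decay of `(1 / l) ^ m`. What is left is
`2 (e / √l) ^ m / (1 - e / l)`, which is at most `1` as soon as `m ≥ 1` and `l ≥ 36`.
-/

lemma mul_pow_mul_zpow_neg_le_pow {K : Type*} [Field K] [LinearOrder K] [IsStrictOrderedRing K]
    {q C L : K} (hq : 0 ≤ q) (hC : 0 ≤ C) (hL : 0 < L) (hCL : C ≤ L) (s : ℕ) :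
    (q * C) ^ s * L ^ (-(s : ℤ)) ≤ q ^ s :=
  calc (q * C) ^ s * L ^ (-(s : ℤ)) = (q * (C / L)) ^ s := by
        rw [zpow_neg, zpow_natCast, ← inv_pow, ← mul_pow, mul_assoc, ← div_eq_mul_inv]
    _ ≤ q ^ s := by
        gcongr
        exact mul_le_of_le_one_right hq ((div_le_one hL).2 hCL)

lemma rpow_div_four_le_sqrt_pow_ceil {l : ℝ} (hl : 1 ≤ l) (x : ℝ) :
    l ^ (x / 4) ≤ √l ^ ⌈x / 2⌉₊ :=
  calc l ^ (x / 4) ≤ l ^ ((⌈x / 2⌉₊ : ℝ) / 2) :=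
        Real.rpow_le_rpow_of_exponent_le hl (by linarith [Nat.le_ceil (x / 2)])
    _ = √l ^ ⌈x / 2⌉₊ := by
        rw [Real.rpow_div_two_eq_sqrt _ (by positivity), Real.rpow_natCast]

lemma rpow_div_four_mul_div_pow_ceil_le {a l x : ℝ} (ha : 0 ≤ a) (hl : 1 ≤ l) (hal : a ≤ √l)
    (hx : 0 < x) : l ^ (x / 4) * (a / l) ^ ⌈x / 2⌉₊ ≤ a / √l := by
  have ceil_ne_zero : ⌈x / 2⌉₊ ≠ 0 := (Nat.ceil_pos.2 (half_pos hx)).ne'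
  calc l ^ (x / 4) * (a / l) ^ ⌈x / 2⌉₊ ≤ √l ^ ⌈x / 2⌉₊ * (a / l) ^ ⌈x / 2⌉₊ := by
        gcongr
        exact rpow_div_four_le_sqrt_pow_ceil hl x
    _ = (a / √l) ^ ⌈x / 2⌉₊ := by
        rw [← mul_pow, mul_div_left_comm, Real.sqrt_div_self, ← div_eq_mul_inv]
    _ ≤ a / √l :=
        pow_le_of_le_one (by positivity) (div_le_one_of_le₀ hal (Real.sqrt_nonneg l)) ceil_ne_zero

lemma rpow_div_four_mul_sum_div_pow_le {a l x : ℝ} (ha : 0 ≤ a) (hl : 1 < l) (hal : a ≤ √l)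
    (hx : 0 < x) (N : ℕ) :
    l ^ (x / 4) * ∑ s ∈ Icc ⌈x / 2⌉₊ N, (a / l) ^ s ≤ a / √l / (1 - a / l) := by
  have sqrt_lt : √l < l := (Real.sqrt_lt' (by positivity)).2 (lt_self_pow₀ hl one_lt_two)
  have ratio_lt_one : a / l < 1 := (div_lt_one (by positivity)).2 (hal.trans_lt sqrt_lt)
  calc l ^ (x / 4) * ∑ s ∈ Icc ⌈x / 2⌉₊ N, (a / l) ^ s
      ≤ l ^ (x / 4) * ((a / l) ^ ⌈x / 2⌉₊ / (1 - a / l)) := by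
        rw [← Ico_add_one_right_eq_Icc]
        gcongr
        exact geom_sum_Ico_le_of_lt_one (by positivity) ratio_lt_one
    _ = l ^ (x / 4) * (a / l) ^ ⌈x / 2⌉₊ / (1 - a / l) := (mul_div_assoc _ _ _).symm
    _ ≤ a / √l / (1 - a / l) :=
        div_le_div_of_nonneg_right (rpow_div_four_mul_div_pow_ceil_le ha hl.le hal hx)
          (sub_pos.2 ratio_lt_one).le

lemma two_mul_exp_one_div_sqrt_le {l : ℝ} (hl : 36 ≤ l) :
    2 * (Real.exp 1 / √l) ≤ 1 - Real.exp 1 / l := by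
  have six_le_sqrt : 6 ≤ √l := Real.le_sqrt_of_sq_le (by linarith)
  have inv_sqrt_le : (√l)⁻¹ ≤ 6⁻¹ := by gcongr
  have inv_le : l⁻¹ ≤ 36⁻¹ := by gcongr
  rw [div_eq_mul_inv, div_eq_mul_inv]
  nlinarith [Real.exp_one_lt_d9, Real.exp_pos 1]

lemma rpow_div_four_mul_sum_exp_one_div_pow_le_half {l x : ℝ} (hl : 36 ≤ l) (hx : 0 < x) (N : ℕ) :
    l ^ (x / 4) * ∑ s ∈ Icc ⌈x / 2⌉₊ N, (Real.exp 1 / l) ^ s ≤ 1 / 2 := by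
  have exp_one_le_sqrt : Real.exp 1 ≤ √l :=
    Real.exp_one_lt_three.le.trans (Real.le_sqrt_of_sq_le (by linarith))
  have ratio_lt_one : Real.exp 1 / l < 1 :=
    (div_lt_one (by linarith)).2 (by linarith [Real.exp_one_lt_three])
  calc l ^ (x / 4) * ∑ s ∈ Icc ⌈x / 2⌉₊ N, (Real.exp 1 / l) ^ s
      ≤ Real.exp 1 / √l / (1 - Real.exp 1 / l) :=
        rpow_div_four_mul_sum_div_pow_le (Real.exp_pos 1).le (by linarith) exp_one_le_sqrt hx N
    _ ≤ 1 / 2 := by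
        rw [div_le_iff₀ (sub_pos.2 ratio_lt_one)]
        linarith [two_mul_exp_one_div_sqrt_le hl]

theorem sum_badPattern_prob_le_general (n : ℕ) (hn : 1 ≤ n) (C L l : ℝ)
    (hC : 0 ≤ C) (hL : 0 < L) (hCL : C ≤ L) (hl : 36 ≤ l) :
    ∑ s ∈ Icc ⌈(n : ℝ) / 2⌉₊ n,
        2 * Real.exp ((n : ℝ) * Real.log l / 8) * (Real.exp 1 * C / l) ^ s * L ^ (-(s : ℤ)) ≤
      Real.exp (-((n : ℝ) * Real.log l) / 8) := by
  have hl_pos : 0 < l := by linarith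
  have exp_split : Real.exp (n * Real.log l / 8) =
      Real.exp (-(n * Real.log l) / 8) * l ^ ((n : ℝ) / 4) := by
    rw [Real.rpow_def_of_pos hl_pos, ← Real.exp_add]
    ring_nf
  calc _ ≤ ∑ s ∈ Icc ⌈(n : ℝ) / 2⌉₊ n,
        2 * Real.exp (n * Real.log l / 8) * (Real.exp 1 / l) ^ s := by
        refine sum_le_sum fun s _ ↦ ?_
        rw [mul_assoc, mul_div_right_comm (Real.exp 1)]
        gcongr
        exact mul_pow_mul_zpow_neg_le_pow (by positivity) hC hL hCL s
    _ = Real.exp (-(n * Real.log l) / 8) *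
        (2 * (l ^ ((n : ℝ) / 4) * ∑ s ∈ Icc ⌈(n : ℝ) / 2⌉₊ n, (Real.exp 1 / l) ^ s)) := by
        rw [← mul_sum, exp_split]
        ring
    _ ≤ Real.exp (-(n * Real.log l) / 8) := by
        refine mul_le_of_le_one_right (Real.exp_pos _).le ?_
        linarith [rpow_div_four_mul_sum_exp_one_div_pow_le_half hl (Nat.cast_pos.2 hn) n]

/-- Let `n ≥ 1` be an integer and `C, L, l` real numbers with `1 ≤ C ≤ L` and `l ≥ 150`.
Then `Σ_{s=⌈n/2⌉}^{n} 2·exp(n·ln(l)/8)·(e·C/l)^s·L^(−s) ≤ exp(−n·ln(l)/8)`. -/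
theorem sum_badPattern_prob_le (n : ℕ) (hn : 1 ≤ n) (C L l : ℝ)
    (hC : 1 ≤ C) (hCL : C ≤ L) (hl : 150 ≤ l) :
    ∑ s ∈ Finset.Icc ⌈(n : ℝ) / 2⌉₊ n,
        2 * Real.exp ((n : ℝ) * Real.log l / 8) * (Real.exp 1 * C / l) ^ s * L ^ (-(s : ℤ)) ≤
      Real.exp (-((n : ℝ) * Real.log l) / 8) :=
  sum_badPattern_prob_le_general n hn C L l (by linarith) (by linarith) hCL (by linarith)
end

section
/- Let M be a finite set with |M| ≥ 32 and let c ≥ 1 be a real number. Let J be a job set over M with |J| ≤ |M|^c, and let L and l be positive integers satisfying 2·|M|^c ≥ L ≥ C(J) + D(J) and l ≥ 150·c·ln|M| / ln ln|M|. Let k ≥ 1 be an integer. If h_1, …, h_k are independent uniformly random functions from J to {0,…,L−1}, then the probability that none of h_1, …, h_k is (L,l)-good for J is at most exp(−k·|J|·ln(l)/8). -/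
open Finset

/-- The dilation of the job set: the maximum length of a job's machine sequence. -/
def dilation {M J : Type*} [Fintype J] (seq : J → List M) : ℕ :=
  Finset.univ.sup fun j : J => (seq j).length

/-- The bad pattern `B` occurs for the hash function `h : J → {0,…,L−1}` if
`h(j) + i = T` for all `T`, `m` and `(j,i) ∈ B T m`. -/
def PatternOccurs {M J : Type*} [Fintype M] [Fintype J]
    {L : ℕ} (B : Fin (2 * L) → M → Finset (J × ℕ)) (h : J → Fin L) : Prop :=
  ∀ T m, ∀ p ∈ B T m, (h p.1 : ℕ) + p.2 = (T : ℕ)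

/-- A hash function `h : J → {0,…,L−1}` is `(L,l)`-good for the job set `J` if no bad
pattern for `(J, L, l)` occurs for `h`. -/
def IsGoodHash {M J : Type*} [Fintype M] [Fintype J] (seq : J → List M)
    (L l : ℕ) (h : J → Fin L) : Prop :=
  ∀ B : Fin (2 * L) → M → Finset (J × ℕ), IsBadPattern seq L l B → ¬ PatternOccurs B h

/-!
Every hash function that is not good exhibits one of the bad patterns, so a union bound applies.
A pattern `B` of size `b` pins down `b` values of the hash function, hence occurs with probability
at most `L⁻ᵇ`. Since `2 b > |J|`, for every `x ≥ 1` this is at most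
`x ^ (-|J| / 2) * (x / L) ^ b`, and the weights `(x / L) ^ b` factor over the pairs `(T, m)`.

For a fixed pair one sums `(x / L) ^ |S|` over the sets `S` of uses of `m` which are empty or have
more than `l` elements. Boosting each nonempty `S` by `y ^ |S| / y ^ l ≥ 1` bounds this sum by
`1 + (|uses of m| / L) * exp (x * y) / y ^ l`. Multiplying over all pairs leaves
`exp (2 * |J| * D(J) * exp (x * y) / y ^ l)`, and for `x = y = √l` the lower bound on `l` makes
`exp l / √l ^ l` much smaller than `|M| ^ (-c)`.
-/

section Counting

variable {α β ι : Type*}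

lemma natCard_forall_div_natCard_pi [Finite ι] (p : α → Prop) :
    (Nat.card {f : ι → α // ∀ i, p (f i)} : ℝ) / Nat.card (ι → α) =
      ((Nat.card {a // p a} : ℝ) / Nat.card α) ^ Nat.card ι := by
  have hsub : Nat.card {f : ι → α // ∀ i, p (f i)} = Nat.card {a // p a} ^ Nat.card ι := by
    rw [Nat.card_congr (Equiv.subtypePiEquivPi (p := fun _ => p)), Nat.card_fun]
  rw [hsub, Nat.card_fun, Nat.cast_pow, Nat.cast_pow, div_pow]

lemma ncard_setOf_eqOn_mul_pow [Fintype α] [Fintype β] (s : Finset α) (f₀ : α → β) :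
    {f : α → β | ∀ a ∈ s, f a = f₀ a}.ncard * Fintype.card β ^ #s =
      Fintype.card β ^ Fintype.card α := by
  classical
  have hpi : {f : α → β | ∀ a ∈ s, f a = f₀ a} =
      Fintype.piFinset fun a => if a ∈ s then {f₀ a} else univ := by
    ext f
    simp only [Set.mem_ofPred_eq, mem_coe, Fintype.mem_piFinset]
    refine forall_congr' fun a => ?_
    by_cases ha : a ∈ s <;> simp [ha]
  have hprod : ∏ a, #(if a ∈ s then {f₀ a} else univ) = Fintype.card β ^ #sᶜ := by
    simp only [apply_ite card, card_singleton, card_univ]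
    rw [prod_ite, prod_const_one, one_mul, prod_const, compl_eq_univ_sdiff, filter_notMem_eq_sdiff]
  rw [hpi, Set.ncard_coe_finset, Fintype.card_piFinset, hprod, ← pow_add, card_compl_add_card]

end Counting

section Estimates

lemma one_add_div_pow_le {a r : ℝ} {n : ℕ} (ha : 0 ≤ a) (hr : 0 < r) (hn : n ≤ r) :
    (1 + a / r) ^ n ≤ 1 + n / r * Real.exp a := by
  have hfrac : (n : ℝ) / r ≤ 1 := (div_le_one hr).2 hn
  have hfrac_nonneg : (0 : ℝ) ≤ n / r := by positivity
  have hconvex : Real.exp (n / r * a) ≤ (1 - n / r) + n / r * Real.exp a := by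
    simpa using convexOn_exp.2 (Set.mem_univ 0) (Set.mem_univ a) (sub_nonneg.2 hfrac)
      hfrac_nonneg (by ring)
  calc (1 + a / r) ^ n
      ≤ Real.exp (a / r) ^ n := by
        gcongr
        linarith [Real.add_one_le_exp (a / r)]
    _ = Real.exp (n / r * a) := by
        rw [← Real.exp_nat_mul]
        ring_nf
    _ ≤ 1 + n / r * Real.exp a := by linarith

lemma sum_powerset_pow_card_of_lt_card_le {α : Type*} (P : Finset α) (l : ℕ) {w y : ℝ}
    (hw : 0 ≤ w) (hy : 1 ≤ y) :
    ∑ S ∈ P.powerset with S.Nonempty → l < #S, w ^ #S ≤ 1 + ((1 + w * y) ^ #P - 1) / y ^ l := by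
  classical
  have hterm : ∀ S ∈ P.powerset.erase ∅,
      (if S.Nonempty → l < #S then w ^ #S else 0) ≤ (w * y) ^ #S / y ^ l := by
    intro S hS
    split_ifs with hlarge
    · have hlt : l < #S := hlarge (nonempty_iff_ne_empty.2 (ne_of_mem_erase hS))
      rw [mul_pow, mul_div_assoc]
      refine le_mul_of_one_le_right (by positivity) ((one_le_div (by positivity)).2 ?_)
      exact pow_le_pow_right₀ hy hlt.le
    · positivity
  have hbinom : 1 + ∑ S ∈ P.powerset.erase ∅, (w * y) ^ #S = (1 + w * y) ^ #P := by
    have hsum := add_sum_erase P.powerset (fun S => (w * y) ^ #S) (empty_mem_powerset P)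
    have hpow := sum_pow_mul_eq_add_pow (w * y) 1 P
    simp only [one_pow, mul_one] at hpow
    rw [add_comm 1 (w * y), ← hpow, ← hsum, card_empty, pow_zero]
  calc ∑ S ∈ P.powerset with S.Nonempty → l < #S, w ^ #S
      = 1 + ∑ S ∈ P.powerset.erase ∅, if S.Nonempty → l < #S then w ^ #S else 0 := by
        rw [sum_filter, ← add_sum_erase _ _ (empty_mem_powerset P)]
        simp only [Finset.not_nonempty_empty, false_imp_iff, if_true, card_empty, pow_zero]
    _ ≤ 1 + ∑ S ∈ P.powerset.erase ∅, (w * y) ^ #S / y ^ l := by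
        gcongr with S hS
        exact hterm S hS
    _ = 1 + ((1 + w * y) ^ #P - 1) / y ^ l := by
        rw [← hbinom, add_sub_cancel_left, sum_div]

end Estimates

section Usages

variable {M J : Type*} [DecidableEq M] [Fintype J] (seq : J → List M)

/-- The uses of the machine `m`: all pairs `(j, i)` such that the `i`-th machine of job `j`
is `m`. -/
def usages (m : M) : Finset (J × ℕ) :=
  (univ.sigma fun j => ((seq j).idxsOf m).toFinset).map (Equiv.sigmaEquivProd J ℕ).toEmbedding

variable {seq} in
lemma mem_usages {m : M} {p : J × ℕ} : p ∈ usages seq m ↔ (seq p.1)[p.2]? = some m := by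
  simp [usages, List.getElem?_eq_some_iff]

lemma card_usages (m : M) : #(usages seq m) = ∑ j, (seq j).count m := by
  rw [usages, card_map, card_sigma]
  exact sum_congr rfl fun j _ => by
    rw [List.toFinset_card_of_nodup List.nodup_idxsOf, List.length_idxsOf]

variable [Fintype M]

lemma card_usages_le_congestion (m : M) : #(usages seq m) ≤ congestion seq := by
  rw [card_usages]
  exact le_sup (f := fun m => ∑ j, (seq j).count m) (mem_univ m)

lemma sum_card_usages_le : ∑ m, #(usages seq m) ≤ Fintype.card J * dilation seq := by
  calc ∑ m, #(usages seq m)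
      = ∑ j, ∑ m, (seq j).count m := by
        simp only [card_usages]
        exact sum_comm
    _ = ∑ j, (seq j).length := by
        refine sum_congr rfl fun j _ => ?_
        simpa using Multiset.sum_count_eq_card (s := univ) (m := (seq j : Multiset M))
          fun m _ => mem_univ m
    _ ≤ Fintype.card J * dilation seq :=
        sum_le_card_nsmul _ _ _ fun j _ => le_sup (f := fun j => (seq j).length) (mem_univ j)

end Usages

section Patterns

variable {M J : Type*} [Fintype M] {L l : ℕ} {B : Fin (2 * L) → M → Finset (J × ℕ)}

/-- The size of a pattern: the total number of pairs `(j, i)` in its sets. -/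
def patternSize (B : Fin (2 * L) → M → Finset (J × ℕ)) : ℕ :=
  ∑ T, ∑ m, #(B T m)

open Classical in
/-- The jobs occurring in a pattern, that is, the jobs whose hash value the pattern prescribes. -/
noncomputable def patternJobs (B : Fin (2 * L) → M → Finset (J × ℕ)) : Finset J :=
  (univ.sigma fun t : Fin (2 * L) × M => B t.1 t.2).image fun e => e.2.1

lemma mem_patternJobs {j : J} : j ∈ patternJobs B ↔ ∃ T m, ∃ p ∈ B T m, p.1 = j := by
  simp [patternJobs]

variable [Fintype J] {seq : J → List M}

lemma IsBadPattern.card_patternJobs (hB : IsBadPattern seq L l B) :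
    #(patternJobs B) = patternSize B := by
  classical
  rw [patternJobs, card_image_of_injOn, card_sigma, Fintype.sum_prod_type, patternSize]
  rintro ⟨⟨T, m⟩, p⟩ hp ⟨⟨T', m'⟩, p'⟩ hp' hjob
  simp only [coe_sigma, Set.mem_sigma_iff, mem_coe] at hp hp'
  obtain ⟨rfl, rfl, rfl⟩ := hB.2.1 T m T' m' p hp.2 p' hp'.2 hjob
  rfl

lemma PatternOccurs.eq_of_mem_patternJobs {h h' : J → Fin L} (hh : PatternOccurs B h)
    (hh' : PatternOccurs B h') {j : J} (hj : j ∈ patternJobs B) : h j = h' j := by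
  obtain ⟨T, m, p, hp, rfl⟩ := mem_patternJobs.1 hj
  exact Fin.ext (Nat.add_right_cancel ((hh T m p hp).trans (hh' T m p hp).symm))

lemma IsBadPattern.ncard_patternOccurs_mul_pow_le (hB : IsBadPattern seq L l B) :
    {h : J → Fin L | PatternOccurs B h}.ncard * L ^ patternSize B ≤ L ^ Fintype.card J := by
  rcases {h : J → Fin L | PatternOccurs B h}.eq_empty_or_nonempty with hempty | ⟨h₀, hh₀⟩
  · simp [hempty]
  · calc {h : J → Fin L | PatternOccurs B h}.ncard * L ^ patternSize B
        ≤ {h : J → Fin L | ∀ j ∈ patternJobs B, h j = h₀ j}.ncard * L ^ patternSize B :=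
          Nat.mul_le_mul_right _ <| Set.ncard_le_ncard fun h hh j hj =>
            PatternOccurs.eq_of_mem_patternJobs hh hh₀ hj
      _ = L ^ Fintype.card J := by
          rw [← hB.card_patternJobs]
          simpa using ncard_setOf_eqOn_mul_pow (patternJobs B) h₀

lemma IsBadPattern.ncard_patternOccurs_le (hB : IsBadPattern seq L l B) (hL : 0 < L) {x : ℝ}
    (hx : 1 ≤ x) :
    ({h : J → Fin L | PatternOccurs B h}.ncard : ℝ) ≤
      L ^ Fintype.card J * Real.exp (-(Fintype.card J * Real.log x / 2)) *
        (x / L) ^ patternSize B := by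
  have hcount : ({h : J → Fin L | PatternOccurs B h}.ncard : ℝ) * L ^ patternSize B ≤
      L ^ Fintype.card J := mod_cast hB.ncard_patternOccurs_mul_pow_le
  have hsize : (Fintype.card J : ℝ) ≤ 2 * patternSize B := mod_cast hB.2.2.2.le
  have hgain : 1 ≤ Real.exp (-(Fintype.card J * Real.log x / 2)) * x ^ patternSize B := by
    rw [← Real.exp_log (pow_pos (zero_lt_one.trans_le hx) _), Real.log_pow, ← Real.exp_add,
      Real.one_le_exp_iff]
    nlinarith [Real.log_nonneg hx]
  rw [div_pow, ← mul_div_assoc, le_div_iff₀ (by positivity), mul_assoc]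
  exact hcount.trans (le_mul_of_one_le_right (by positivity) hgain)

end Patterns

section UnionBound

variable {M J : Type*} [Fintype M] [DecidableEq M] [Fintype J] (seq : J → List M) (L l : ℕ)

/-- The families satisfying the two conditions of a bad pattern that constrain each set `B T m`
separately. Weights multiplicative in these sets sum to a product over the pairs `(T, m)`. -/
def candidatePatterns : Finset (Fin (2 * L) → M → Finset (J × ℕ)) :=
  Fintype.piFinset fun _ => Fintype.piFinset fun m =>
    {S ∈ (usages seq m).powerset | S.Nonempty → l < #S}

variable {seq L l} in
lemma IsBadPattern.mem_candidatePatterns {B : Fin (2 * L) → M → Finset (J × ℕ)}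
    (hB : IsBadPattern seq L l B) : B ∈ candidatePatterns seq L l := by
  simp only [candidatePatterns, Fintype.mem_piFinset, mem_filter, mem_powerset]
  refine fun T m => ⟨fun p hp => mem_usages.2 (hB.1 T m p hp), fun hne => ?_⟩
  exact (hB.2.2.1 T m).resolve_left hne.ne_empty

lemma sum_candidatePatterns_pow_patternSize (w : ℝ) :
    ∑ B ∈ candidatePatterns seq L l, w ^ patternSize B =
      ∏ _T : Fin (2 * L), ∏ m, ∑ S ∈ (usages seq m).powerset with S.Nonempty → l < #S, w ^ #S := by
  simp only [candidatePatterns, patternSize, prod_univ_sum, ← prod_pow_eq_pow_sum]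

variable {L} {x y : ℝ}

lemma sum_usages_pow_card_le (hL : 0 < L) (hC : congestion seq ≤ L) (hx : 0 ≤ x) (hy : 1 ≤ y)
    (m : M) :
    ∑ S ∈ (usages seq m).powerset with S.Nonempty → l < #S, (x / L) ^ #S ≤
      Real.exp (#(usages seq m) / L * (Real.exp (x * y) / y ^ l)) := by
  have hcard : (#(usages seq m) : ℝ) ≤ L := mod_cast (card_usages_le_congestion seq m).trans hC
  have hpow : (1 + x / L * y) ^ #(usages seq m) ≤
      1 + #(usages seq m) / L * Real.exp (x * y) := by
    rw [div_mul_eq_mul_div]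
    exact one_add_div_pow_le (by positivity) (by positivity) hcard
  calc ∑ S ∈ (usages seq m).powerset with S.Nonempty → l < #S, (x / L) ^ #S
      ≤ 1 + ((1 + x / L * y) ^ #(usages seq m) - 1) / y ^ l :=
        sum_powerset_pow_card_of_lt_card_le _ l (by positivity) hy
    _ ≤ 1 + #(usages seq m) / L * Real.exp (x * y) / y ^ l := by
        gcongr
        linarith
    _ ≤ Real.exp (#(usages seq m) / L * (Real.exp (x * y) / y ^ l)) := by
        rw [mul_div_assoc, add_comm]
        exact Real.add_one_le_exp _

lemma sum_candidatePatterns_pow_patternSize_le (hL : 0 < L) (hC : congestion seq ≤ L)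
    (hx : 0 ≤ x) (hy : 1 ≤ y) :
    ∑ B ∈ candidatePatterns seq L l, (x / L) ^ patternSize B ≤
      Real.exp (Fintype.card J * (2 * dilation seq * (Real.exp (x * y) / y ^ l))) := by
  set ε := Real.exp (x * y) / y ^ l
  have husages : (∑ m, #(usages seq m) : ℝ) ≤ Fintype.card J * dilation seq :=
    mod_cast sum_card_usages_le seq
  calc ∑ B ∈ candidatePatterns seq L l, (x / L) ^ patternSize B
      ≤ ∏ _T : Fin (2 * L), ∏ m, Real.exp (#(usages seq m) / L * ε) := by
        rw [sum_candidatePatterns_pow_patternSize]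
        gcongr with T _ m _
        exact sum_usages_pow_card_le seq l hL hC hx hy m
    _ = Real.exp (2 * ε * ∑ m, (#(usages seq m) : ℝ)) := by
        rw [prod_const, card_univ, Fintype.card_fin, ← Real.exp_sum, ← Real.exp_nat_mul,
          ← sum_mul, ← sum_div]
        push_cast
        field_simp
    _ ≤ Real.exp (2 * ε * (Fintype.card J * dilation seq)) := by
        gcongr
    _ = Real.exp (Fintype.card J * (2 * dilation seq * ε)) := by
        ring_nf

lemma ncard_not_isGoodHash_le_sum :
    {h : J → Fin L | ¬ IsGoodHash seq L l h}.ncard ≤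
      ∑ B ∈ candidatePatterns seq L l,
        {h : J → Fin L | IsBadPattern seq L l B ∧ PatternOccurs B h}.ncard := by
  refine (Set.ncard_le_ncard fun h hh => ?_).trans (Finset.set_ncard_biUnion_le _ _)
  simp only [IsGoodHash, Set.mem_ofPred_eq, not_forall, not_not] at hh
  obtain ⟨B, hB, hoccurs⟩ := hh
  exact Set.mem_biUnion hB.mem_candidatePatterns ⟨hB, hoccurs⟩

lemma ncard_not_isGoodHash_le (hL : 0 < L) (hC : congestion seq ≤ L) (hx : 1 ≤ x) (hy : 1 ≤ y) :
    ({h : J → Fin L | ¬ IsGoodHash seq L l h}.ncard : ℝ) ≤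
      L ^ Fintype.card J * Real.exp (Fintype.card J *
        (2 * dilation seq * (Real.exp (x * y) / y ^ l) - Real.log x / 2)) := by
  set A : ℝ := L ^ Fintype.card J * Real.exp (-(Fintype.card J * Real.log x / 2))
  have hpattern : ∀ B : Fin (2 * L) → M → Finset (J × ℕ),
      ({h : J → Fin L | IsBadPattern seq L l B ∧ PatternOccurs B h}.ncard : ℝ) ≤
        A * (x / L) ^ patternSize B := by
    intro B
    by_cases hB : IsBadPattern seq L l B
    · simpa only [hB, true_and] using hB.ncard_patternOccurs_le hL hx
    · simp only [hB, false_and, Set.ofPred_false, Set.ncard_empty, Nat.cast_zero]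
      positivity
  calc ({h : J → Fin L | ¬ IsGoodHash seq L l h}.ncard : ℝ)
      ≤ ∑ B ∈ candidatePatterns seq L l,
          ({h : J → Fin L | IsBadPattern seq L l B ∧ PatternOccurs B h}.ncard : ℝ) :=
        mod_cast ncard_not_isGoodHash_le_sum seq l
    _ ≤ ∑ B ∈ candidatePatterns seq L l, A * (x / L) ^ patternSize B :=
        sum_le_sum fun B _ => hpattern B
    _ ≤ A * Real.exp (Fintype.card J * (2 * dilation seq * (Real.exp (x * y) / y ^ l))) := by
        rw [← mul_sum]
        gcongr
        exact sum_candidatePatterns_pow_patternSize_le seq l hL hC (zero_le_one.trans hx) hy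
    _ = _ := by
        rw [mul_assoc, ← Real.exp_add]
        ring_nf

lemma prob_not_isGoodHash_le (hL : 0 < L) (hC : congestion seq ≤ L) (hx : 1 ≤ x) (hy : 1 ≤ y) :
    (Nat.card {h : J → Fin L // ¬ IsGoodHash seq L l h} : ℝ) / Nat.card (J → Fin L) ≤
      Real.exp (Fintype.card J *
        (2 * dilation seq * (Real.exp (x * y) / y ^ l) - Real.log x / 2)) := by
  rw [Nat.card_fun, Nat.card_fin, Nat.card_eq_fintype_card (α := J), Nat.cast_pow,
    div_le_iff₀' (by positivity)]
  exact ncard_not_isGoodHash_le seq l hL hC hx hy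

end UnionBound

section Parameters

variable {K u a : ℝ}

lemma le_of_mul_div_log_le (hK : 0 ≤ K) (hu : 1 < u) (ha : K * u / Real.log u ≤ a) : K ≤ a := by
  have hlog : 0 < Real.log u := Real.log_pos hu
  refine le_trans ((le_div_iff₀ hlog).2 ?_) ha
  gcongr
  exact Real.log_le_self (by linarith)

lemma log_le_two_mul_sqrt (hu : 0 ≤ u) : Real.log u ≤ 2 * √u := by
  have hlog := Real.log_le_self (Real.sqrt_nonneg u)
  rw [Real.log_sqrt hu] at hlog
  linarith

lemma mul_le_two_mul_mul_log_of_mul_div_log_le (hK : 2 ≤ K) (hu : 1 < u)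
    (ha : K * u / Real.log u ≤ a) : K * u ≤ 2 * (a * Real.log a) := by
  have hu₀ : 0 < u := zero_lt_one.trans hu
  have hlog : 0 < Real.log u := Real.log_pos hu
  have hsqrt : √u ≤ a := by
    refine le_trans ((le_div_iff₀ hlog).2 ?_) ha
    calc √u * Real.log u ≤ √u * (2 * √u) := by gcongr; exact log_le_two_mul_sqrt hu₀.le
      _ = 2 * u := by rw [mul_left_comm, Real.mul_self_sqrt hu₀.le]
      _ ≤ K * u := by gcongr
  have ha₀ : 0 < a := (Real.sqrt_pos.2 hu₀).trans_le hsqrt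
  have hlog_le : Real.log u ≤ 2 * Real.log a := by
    have hmono := Real.log_le_log (Real.sqrt_pos.2 hu₀) hsqrt
    rw [Real.log_sqrt hu₀.le] at hmono
    linarith
  calc K * u ≤ a * Real.log u := (div_le_iff₀ hlog).1 ha
    _ ≤ a * (2 * Real.log a) := by gcongr
    _ = 2 * (a * Real.log a) := by ring

lemma exp_natCast_div_sqrt_pow {l : ℕ} (hl : 0 < l) :
    Real.exp l / √l ^ l = Real.exp (l - l * Real.log l / 2) := by
  have hl' : (0 : ℝ) < l := Nat.cast_pos.2 hl
  rw [Real.exp_sub, mul_div_assoc, ← Real.log_sqrt hl'.le, Real.exp_nat_mul,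
    Real.exp_log (Real.sqrt_pos.2 hl')]

lemma natCast_le_log_of_three_pow_le {n : ℕ} (ha : 3 ^ n ≤ a) : n ≤ Real.log a := by
  rw [Real.le_log_iff_exp_le (lt_of_lt_of_le (by positivity) ha)]
  calc Real.exp n = Real.exp 1 ^ n := (Real.exp_one_pow n).symm
    _ ≤ 3 ^ n := by gcongr; exact Real.exp_one_lt_three.le
    _ ≤ a := ha

lemma four_mul_rpow_mul_exp_div_sqrt_pow_le {N c : ℝ} {l : ℕ} (hN : Real.exp 1 < N) (hc : 1 ≤ c)
    (hl : 150 * c * Real.log N / Real.log (Real.log N) ≤ l) :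
    4 * N ^ c * (Real.exp l / √l ^ l) ≤ Real.log l / 8 := by
  have hN₀ : 0 < N := (Real.exp_pos 1).trans hN
  have hlogN : 1 < Real.log N := (Real.lt_log_iff_exp_lt hN₀).2 hN
  have hl150 : (150 : ℝ) ≤ l := by
    linarith [le_of_mul_div_log_le (by positivity) hlogN hl]
  have hlog : 4 ≤ Real.log l := mod_cast natCast_le_log_of_three_pow_le (n := 4) (by linarith)
  have hcN : 150 * c * Real.log N ≤ 2 * (l * Real.log l) :=
    mul_le_two_mul_mul_log_of_mul_div_log_le (by linarith) hlogN hl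
  have hexponent : Real.log N * c + (l - l * Real.log l / 2) ≤ -7 := by nlinarith
  have hexp : Real.exp (-7) ≤ 1 / 8 := by
    rw [Real.exp_neg, inv_le_comm₀ (Real.exp_pos 7) (by norm_num)]
    linarith [Real.add_one_le_exp 7]
  have hl₀ : 0 < l := by exact_mod_cast (by linarith : (0 : ℝ) < l)
  rw [exp_natCast_div_sqrt_pow hl₀, Real.rpow_def_of_pos hN₀, mul_assoc, ← Real.exp_add]
  linarith [Real.exp_le_exp.2 hexponent]

end Parameters

lemma prob_not_isGoodHash_le_exp_neg {M J : Type*} [Fintype M] [DecidableEq M] [Fintype J]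
    (seq : J → List M) {c : ℝ} (hc : 1 ≤ c) (hM : 3 ≤ Fintype.card M)
    {L l : ℕ} (hL : 0 < L) (hC : congestion seq ≤ L)
    (hD : (dilation seq : ℝ) ≤ 2 * (Fintype.card M : ℝ) ^ c)
    (hl : 150 * c * Real.log (Fintype.card M) / Real.log (Real.log (Fintype.card M)) ≤ l) :
    (Nat.card {h : J → Fin L // ¬ IsGoodHash seq L l h} : ℝ) / Nat.card (J → Fin L) ≤
      Real.exp (-(Fintype.card J * Real.log l / 8)) := by
  have hexpM : Real.exp 1 < Fintype.card M := Real.exp_one_lt_three.trans_le (mod_cast hM)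
  have hlogM : 1 < Real.log (Fintype.card M) :=
    (Real.lt_log_iff_exp_lt ((Real.exp_pos 1).trans hexpM)).2 hexpM
  have hsqrt : 1 ≤ √(l : ℝ) :=
    Real.one_le_sqrt.2 (by linarith [le_of_mul_div_log_le (by positivity) hlogM hl])
  refine (prob_not_isGoodHash_le seq l hL hC hsqrt hsqrt).trans (Real.exp_le_exp.2 ?_)
  rw [Real.mul_self_sqrt l.cast_nonneg, Real.log_sqrt l.cast_nonneg, mul_div_assoc, ← mul_neg]
  gcongr
  have hdilation : 2 * dilation seq * (Real.exp l / √l ^ l) ≤ Real.log l / 8 := by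
    calc 2 * dilation seq * (Real.exp l / √l ^ l)
        ≤ 2 * (2 * (Fintype.card M : ℝ) ^ c) * (Real.exp l / √l ^ l) := by gcongr
      _ = 4 * (Fintype.card M : ℝ) ^ c * (Real.exp l / √l ^ l) := by ring
      _ ≤ Real.log l / 8 := four_mul_rpow_mul_exp_div_sqrt_pow_le hexpM hc hl
  linarith

theorem prob_no_hash_good_le_general {M J : Type*} [Fintype M] [DecidableEq M] [Fintype J]
    (seq : J → List M) (c : ℝ) (hc : 1 ≤ c) (hM : 3 ≤ Fintype.card M)
    (L l : ℕ) (hL0 : 0 < L) (hC : congestion seq ≤ L)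
    (hD : (dilation seq : ℝ) ≤ 2 * (Fintype.card M : ℝ) ^ c)
    (hl : 150 * c * Real.log (Fintype.card M) / Real.log (Real.log (Fintype.card M)) ≤ (l : ℝ))
    (k : ℕ) :
    (Nat.card {H : Fin k → J → Fin L // ∀ i, ¬ IsGoodHash seq L l (H i)} : ℝ) /
        (Nat.card (Fin k → J → Fin L) : ℝ) ≤
      Real.exp (-((k : ℝ) * (Fintype.card J : ℝ) * Real.log l) / 8) := by
  rw [natCard_forall_div_natCard_pi (fun h => ¬ IsGoodHash seq L l h), Nat.card_fin]
  calc ((Nat.card {h : J → Fin L // ¬ IsGoodHash seq L l h} : ℝ) / Nat.card (J → Fin L)) ^ k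
      ≤ Real.exp (-(Fintype.card J * Real.log l / 8)) ^ k := by
        gcongr
        exact prob_not_isGoodHash_le_exp_neg seq hc hM hL0 hC hD hl
    _ = Real.exp (-(k * Fintype.card J * Real.log l) / 8) := by
        rw [← Real.exp_nat_mul]
        ring_nf

/-- If `|M| ≥ 32`, `c ≥ 1`, `|J| ≤ |M|^c`, `2·|M|^c ≥ L ≥ C(J) + D(J)`,
`l ≥ 150·c·ln|M| / ln ln|M|` and `k ≥ 1`, then the probability that none of `k`
independent uniformly random functions `h_1, …, h_k : J → {0,…,L−1}` is `(L,l)`-good for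
`J` is at most `exp(−k·|J|·ln(l)/8)`. The `k` independent uniform functions are modelled
as a uniformly random tuple `H : Fin k → (J → Fin L)`, and the probability is expressed
as a ratio of counts. -/
theorem prob_no_hash_good_le {M J : Type*} [Fintype M] [DecidableEq M] [Fintype J]
    (seq : J → List M) (c : ℝ) (hc : 1 ≤ c) (hM : 32 ≤ Fintype.card M)
    (hJ : (Fintype.card J : ℝ) ≤ (Fintype.card M : ℝ) ^ c)
    (L l : ℕ) (hL0 : 0 < L) (hl0 : 0 < l)
    (hL : (L : ℝ) ≤ 2 * (Fintype.card M : ℝ) ^ c)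
    (hCD : congestion seq + dilation seq ≤ L)
    (hl : 150 * c * Real.log (Fintype.card M) / Real.log (Real.log (Fintype.card M)) ≤ (l : ℝ))
    (k : ℕ) (hk : 1 ≤ k) :
    (Nat.card {H : Fin k → J → Fin L // ∀ i, ¬ IsGoodHash seq L l (H i)} : ℝ) /
        (Nat.card (Fin k → J → Fin L) : ℝ) ≤
      Real.exp (-((k : ℝ) * (Fintype.card J : ℝ) * Real.log l) / 8) := by
  have hD : dilation seq ≤ L := by omega
  exact prob_no_hash_good_le_general seq c hc (by omega) L l hL0 (by omega)
    ((Nat.cast_le.2 hD).trans hL) hl k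
end

section
/- Let M be a finite set with |M| ≥ 32, let c ≥ 1 be a real number, and let I be a finite identifier set with |I| = ⌊|M|^c⌋. Let S be a finite nonempty set of finite sequences of elements of M (the domain set). Let L and l be positive integers with L ≤ 2·|M|^c and l ≥ 150·c·ln|M| / ln ln|M|, let b ≥ 1 be a real number, and let k be a positive integer with k ≥ 8·(b+1)·(ln|S| + (c+1)·ln|M|) / ln(l). If g_1, …, g_k are independent uniformly random functions from S × I to {0,…,L−1}, then with probability at least 1 − 2·|M|^(−b), the family (g_1, …, g_k) is (L,l)-good for S. -/
open Finset

/-- The congestion of the job set `J` (a finite set of job indices of type `ι`, each job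
`j` carrying the machine sequence `seq j`): the maximum over machines `m` of the total
number of pairs `(j,i)` with `j ∈ J` and `seq(j)_i = m`. -/
def congestionOn {M ι : Type*} [Fintype M] [DecidableEq M]
    (J : Finset ι) (seq : ι → List M) : ℕ :=
  Finset.univ.sup fun m : M => ∑ j ∈ J, (seq j).count m

/-- The dilation of the job set `J`: the maximum length of a job's machine sequence. -/
def dilationOn {M ι : Type*} (J : Finset ι) (seq : ι → List M) : ℕ :=
  J.sup fun j => (seq j).length

/-- A bad pattern for the job set `J` (a finite set of job indices of type `ι`) with
machine sequences `seq` and parameters `L`, `l`. -/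
def IsBadPatternOn {M ι : Type*} [Fintype M] (J : Finset ι) (seq : ι → List M)
    (L l : ℕ) (B : Fin (2 * L) → M → Finset (ι × ℕ)) : Prop :=
  (∀ T m, ∀ p ∈ B T m, p.1 ∈ J ∧ (seq p.1)[p.2]? = some m) ∧
  (∀ T m T' m', ∀ p ∈ B T m, ∀ p' ∈ B T' m', p.1 = p'.1 → T = T' ∧ m = m' ∧ p = p') ∧
  (∀ T m, B T m = ∅ ∨ l < (B T m).card) ∧
  J.card < 2 * ∑ T, ∑ m, (B T m).card

/-- The bad pattern `B` occurs for `h` if `h(j) + i = T` for all `T`, `m`, `(j,i) ∈ B T m`. -/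
def PatternOccursOn {M ι : Type*} [Fintype M]
    {L : ℕ} (B : Fin (2 * L) → M → Finset (ι × ℕ)) (h : ι → Fin L) : Prop :=
  ∀ T m, ∀ p ∈ B T m, (h p.1 : ℕ) + p.2 = (T : ℕ)

/-- `h` is `(L,l)`-good for the job set `J` if no bad pattern for `(J, L, l)` occurs for `h`. -/
def IsGoodHashOn {M ι : Type*} [Fintype M] (J : Finset ι) (seq : ι → List M)
    (L l : ℕ) (h : ι → Fin L) : Prop :=
  ∀ B : Fin (2 * L) → M → Finset (ι × ℕ), IsBadPatternOn J seq L l B → ¬ PatternOccursOn B h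

/-- The family `g : Fin k → (↥S × I → Fin L)` is `(L,l)`-good for the domain set `S`:
for every `S`-supported job set `J` (a finite set of (sequence ∈ S, identifier) pairs with
pairwise distinct identifiers, i.e. injective identifier map) with `L ≥ C(J) + D(J)`, at
least one induced hash function `h_i = g i` is `(L,l)`-good for `J`. -/
def IsGoodFamily {M I : Type*} [Fintype M] [DecidableEq M] [Fintype I]
    (S : Finset (List M)) (L l k : ℕ) (g : Fin k → (↥S × I → Fin L)) : Prop :=
  ∀ J : Finset (↥S × I), Set.InjOn Prod.snd (J : Set (↥S × I)) →
    congestionOn J (fun p => (p.1 : List M)) + dilationOn J (fun p => (p.1 : List M)) ≤ L →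
    ∃ i : Fin k, IsGoodHashOn J (fun p => (p.1 : List M)) L l (g i)

/-!
Fix a job set `J` of congestion at most `L`. A given bad pattern with `N` entries constrains `N`
different jobs, hence occurs with probability `L⁻ᴺ`; since `N > |J| / 2`, this is at most
`s ^ (-|J|) * (s² / L) ^ N` for every `s ≥ 1`. The weights `(s² / L) ^ N` factor over the cells
`(T, m)`, and a cell is either empty or contains more than `l` of at most `L` possible entries, so
its total weight exceeds `1` only by an exponential tail. With `s = l ^ (1 / 4)` the product over
all `2 L |M|` cells stays below `2`, and a random function is bad for `J` with probability at most
`l ^ (-|J| / 8)`. All `k` functions are then bad for `J` with probability at most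
`l ^ (-k |J| / 8)`, and summing over the nonempty `J` gives `(1 + l ^ (-k / 8)) ^ |S × I| - 1`.
-/

section UniformProb

variable {α : Type*}

/-- The probability of the event `p` under the uniform distribution on the finite type `α`, written
as a quotient of cardinalities; it is `0` when `α` is empty. -/
noncomputable def uniformProb (p : α → Prop) : ℝ :=
  (Nat.card {a // p a} : ℝ) / (Nat.card α : ℝ)

lemma uniformProb_nonneg (p : α → Prop) : 0 ≤ uniformProb p := by
  unfold uniformProb
  positivity

lemma uniformProb_of_forall [Finite α] [Nonempty α] {p : α → Prop} (hp : ∀ a, p a) :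
    uniformProb p = 1 := by
  rw [uniformProb, Nat.card_congr (Equiv.subtypeUnivEquiv hp)]
  exact div_self (mod_cast Nat.card_pos.ne')

lemma uniformProb_mono [Finite α] {p q : α → Prop} (h : ∀ a, p a → q a) :
    uniformProb p ≤ uniformProb q := by
  unfold uniformProb
  gcongr
  exact Finite.card_le_of_embedding (Subtype.impEmbedding p q h)

lemma uniformProb_eq_one_sub [Finite α] [Nonempty α] (p : α → Prop) :
    uniformProb p = 1 - uniformProb (fun a => ¬p a) := by
  classical
  have hcard : Nat.card {a // p a} + Nat.card {a // ¬p a} = Nat.card α := by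
    rw [← Nat.card_sum, Nat.card_congr (Equiv.sumCompl p)]
  have hα : (Nat.card α : ℝ) ≠ 0 := mod_cast Nat.card_pos.ne'
  rw [uniformProb, uniformProb, eq_sub_iff_add_eq, ← add_div, div_eq_one_iff_eq hα]
  exact_mod_cast hcard

lemma uniformProb_exists_mem_le_sum [Finite α] {κ : Type*} (s : Finset κ) (p : κ → α → Prop) :
    uniformProb (fun a => ∃ i ∈ s, p i a) ≤ ∑ i ∈ s, uniformProb (p i) := by
  classical
  have := Fintype.ofFinite α
  have hunion : univ.filter (fun a => ∃ i ∈ s, p i a) = s.biUnion fun i => univ.filter (p i) := by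
    ext a
    simp
  simp only [uniformProb, Nat.card_eq_fintype_card, Fintype.card_subtype]
  rw [← sum_div, hunion]
  gcongr
  exact_mod_cast card_biUnion_le

lemma uniformProb_eq_le_inv_card {β : Type*} {f : α → β} (hf : f.Injective) (b : β) :
    uniformProb (fun a => f a = b) ≤ (Nat.card α : ℝ)⁻¹ := by
  have : Subsingleton {a // f a = b} := ⟨fun a a' => Subtype.ext (hf (a.2.trans a'.2.symm))⟩
  rw [uniformProb, ← one_div]
  gcongr
  exact_mod_cast Finite.card_le_one_iff_subsingleton.2 this

lemma uniformProb_forall_apply {ι : Type*} [Fintype ι] {β : ι → Type*} (p : ∀ i, β i → Prop) :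
    uniformProb (fun f : ∀ i, β i => ∀ i, p i (f i)) = ∏ i, uniformProb (p i) := by
  simp only [uniformProb]
  rw [Nat.card_congr Equiv.subtypePiEquivPi, Nat.card_pi, Nat.card_pi, prod_div_distrib,
    Nat.cast_prod, Nat.cast_prod]

lemma uniformProb_forall_mem_apply [Finite α] [Nonempty α] {ι κ : Type*} [Finite ι]
    {s : Finset κ} {f : κ → ι} (hf : Set.InjOn f s) (p : κ → α → Prop) :
    uniformProb (fun h : ι → α => ∀ c ∈ s, p c (h (f c))) = ∏ c ∈ s, uniformProb (p c) := by
  classical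
  have := Fintype.ofFinite ι
  have hevent : (fun h : ι → α => ∀ c ∈ s, p c (h (f c))) =
      fun h => ∀ j, ∀ c ∈ s, f c = j → p c (h j) := by
    grind
  have hfree : ∀ j ∉ s.image f, uniformProb (fun a => ∀ c ∈ s, f c = j → p c a) = 1 := fun j hj =>
    uniformProb_of_forall fun a c hc hcj => absurd (hcj ▸ mem_image_of_mem f hc) hj
  have hconstrained : ∀ c ∈ s, (fun a => ∀ c' ∈ s, f c' = f c → p c' a) = p c := fun c hc => by
    ext a
    exact ⟨fun h => h c hc rfl, fun h c' hc' hcc' => hf hc' hc hcc' ▸ h⟩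
  rw [hevent, uniformProb_forall_apply fun j a => ∀ c ∈ s, f c = j → p c a,
    ← prod_subset (subset_univ (s.image f)) fun j _ hj => hfree j hj, prod_image hf]
  exact prod_congr rfl fun c hc => congrArg uniformProb (hconstrained c hc)

end UniformProb

section SubsetSums

variable {α : Type*}

lemma sum_powerset_pow_card_le_exp (s : Finset α) {a : ℝ} (ha : 0 ≤ a) :
    ∑ t ∈ s.powerset, a ^ #t ≤ Real.exp (#s * a) := by
  classical
  simpa only [prod_one_add, prod_const, sum_const, nsmul_eq_mul] using
    Real.prod_one_add_le_exp_sum s (f := fun _ => a) fun _ => ha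

lemma sum_nonempty_pow_card_le_exp_sub_one [Fintype α] {a : ℝ} (ha : 0 ≤ a) :
    ∑ t : Finset α with t.Nonempty, a ^ #t ≤ Real.exp (Fintype.card α * a) - 1 := by
  classical
  have hexp := sum_powerset_pow_card_le_exp (univ : Finset α) ha
  rw [powerset_univ, card_univ, ← add_sum_erase _ _ (mem_univ ∅), card_empty, pow_zero] at hexp
  have herase : ({t | t.Nonempty} : Finset (Finset α)) = univ.erase ∅ := by
    ext t
    simp [nonempty_iff_ne_empty]
  rw [herase]
  linarith

lemma sum_powerset_filter_lt_card_pow_le (s : Finset α) (l : ℕ) {a w : ℝ} (ha : 0 ≤ a)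
    (hw : 1 ≤ w) :
    ∑ t ∈ s.powerset with l < #t, a ^ #t ≤ (w ^ l)⁻¹ * Real.exp (#s * (a * w)) := by
  calc ∑ t ∈ s.powerset with l < #t, a ^ #t
      ≤ ∑ t ∈ s.powerset with l < #t, (w ^ l)⁻¹ * (a * w) ^ #t := by
        refine sum_le_sum fun t ht => ?_
        have hpow : w ^ l ≤ w ^ #t := pow_le_pow_right₀ hw (mem_filter.1 ht).2.le
        rw [inv_mul_eq_div, le_div_iff₀ (by positivity), mul_pow]
        gcongr
    _ ≤ ∑ t ∈ s.powerset, (w ^ l)⁻¹ * (a * w) ^ #t :=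
        sum_le_sum_of_subset_of_nonneg (filter_subset _ _) fun t _ _ => by positivity
    _ ≤ (w ^ l)⁻¹ * Real.exp (#s * (a * w)) := by
        rw [← mul_sum]
        gcongr
        exact sum_powerset_pow_card_le_exp s (by positivity)

end SubsetSums

section Patterns

variable {M ι : Type*}

open Classical in
/-- The pairs `(j, i)` with `j ∈ J` and `seq(j)_i = m`: the possible entries of a cell `(T, m)` of a
bad pattern. -/
noncomputable def visits (J : Finset ι) (seq : ι → List M) (m : M) : Finset (ι × ℕ) :=
  (J.sigma fun j => {i : Fin (seq j).length | (seq j).get i = m}).image fun x => (x.1, (x.2 : ℕ))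

lemma mem_visits {J : Finset ι} {seq : ι → List M} {m : M} {p : ι × ℕ} :
    p ∈ visits J seq m ↔ p.1 ∈ J ∧ (seq p.1)[p.2]? = some m := by
  simp only [visits, mem_image, mem_sigma, mem_filter_univ, List.getElem?_eq_some_iff]
  constructor
  · rintro ⟨⟨j, i⟩, ⟨hj, hi⟩, rfl⟩
    exact ⟨hj, i.2, hi⟩
  · rintro ⟨hj, hlt, hi⟩
    exact ⟨⟨p.1, p.2, hlt⟩, ⟨hj, hi⟩, rfl⟩

open Classical in
/-- The possible contents of a cell `(T, m)` of a bad pattern, regardless of the other cells. -/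
noncomputable def cellContents (J : Finset ι) (seq : ι → List M) (l : ℕ) (m : M) :
    Finset (Finset (ι × ℕ)) :=
  {B ∈ (visits J seq m).powerset | B = ∅ ∨ l < #B}

variable [Fintype M]

lemma card_visits_le_congestionOn [DecidableEq M] (J : Finset ι) (seq : ι → List M) (m : M) :
    #(visits J seq m) ≤ congestionOn J seq := by
  classical
  calc #(visits J seq m) ≤ ∑ j ∈ J, #{i : Fin (seq j).length | (seq j).get i = m} := by
        rw [visits, ← card_sigma]
        convert card_image_le
    _ = ∑ j ∈ J, (seq j).count m := sum_congr rfl fun j _ =>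
        Fin.card_filter_univ_eq_vector_get_eq_count m (⟨seq j, rfl⟩ : List.Vector M _)
    _ ≤ congestionOn J seq := le_sup (f := fun m => ∑ j ∈ J, (seq j).count m) (mem_univ m)

lemma IsBadPatternOn.mem_cellContents {J : Finset ι} {seq : ι → List M} {L l : ℕ}
    {B : Fin (2 * L) → M → Finset (ι × ℕ)} (hB : IsBadPatternOn J seq L l B)
    (T : Fin (2 * L)) (m : M) : B T m ∈ cellContents J seq l m := by
  simp only [cellContents, mem_filter, mem_powerset]
  exact ⟨fun p hp => mem_visits.2 (hB.1 T m p hp), hB.2.2.1 T m⟩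

lemma not_isBadPatternOn_empty (seq : ι → List M) (L l : ℕ)
    (B : Fin (2 * L) → M → Finset (ι × ℕ)) : ¬IsBadPatternOn ∅ seq L l B := by
  rintro ⟨hmem, -, -, hsize⟩
  have hB : ∀ T m, B T m = ∅ := fun T m =>
    eq_empty_of_forall_notMem fun p hp => notMem_empty _ (hmem T m p hp).1
  simp [hB] at hsize

lemma sum_cellContents_pow_card_le [DecidableEq M] {J : Finset ι} {seq : ι → List M} {L : ℕ}
    (hC : congestionOn J seq ≤ L) (l : ℕ) (m : M) {a w : ℝ} (ha : 0 ≤ a) (hw : 1 ≤ w) :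
    ∑ B ∈ cellContents J seq l m, a ^ #B ≤ 1 + (w ^ l)⁻¹ * Real.exp (L * (a * w)) := by
  classical
  have hsubset : cellContents J seq l m ⊆
      insert ∅ ((visits J seq m).powerset.filter fun B => l < #B) := by
    intro B hB
    simp only [cellContents, mem_filter] at hB
    grind
  have hcard : (#(visits J seq m) : ℝ) ≤ L :=
    mod_cast (card_visits_le_congestionOn J seq m).trans hC
  calc ∑ B ∈ cellContents J seq l m, a ^ #B
      ≤ ∑ B ∈ insert ∅ ((visits J seq m).powerset.filter fun B => l < #B), a ^ #B :=
        sum_le_sum_of_subset_of_nonneg hsubset fun B _ _ => by positivity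
    _ = 1 + ∑ B ∈ (visits J seq m).powerset with l < #B, a ^ #B := by
        rw [sum_insert (by simp), card_empty, pow_zero]
    _ ≤ 1 + (w ^ l)⁻¹ * Real.exp (#(visits J seq m) * (a * w)) := by
        gcongr
        exact sum_powerset_filter_lt_card_pow_le _ l ha hw
    _ ≤ 1 + (w ^ l)⁻¹ * Real.exp (L * (a * w)) := by
        gcongr

lemma sum_piFinset_cellContents_prod_pow_card_le [DecidableEq M] {J : Finset ι}
    {seq : ι → List M} {L : ℕ} (hC : congestionOn J seq ≤ L) (l : ℕ) {a w : ℝ} (ha : 0 ≤ a)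
    (hw : 1 ≤ w) :
    ∑ B ∈ Fintype.piFinset fun _ : Fin (2 * L) => Fintype.piFinset (cellContents J seq l),
        ∏ T, ∏ m, a ^ #(B T m) ≤
      Real.exp (2 * L * Fintype.card M * ((w ^ l)⁻¹ * Real.exp (L * (a * w)))) := by
  set δ : ℝ := (w ^ l)⁻¹ * Real.exp (L * (a * w))
  have hcell : ∀ m, ∑ B ∈ cellContents J seq l m, a ^ #B ≤ Real.exp δ := fun m =>
    (sum_cellContents_pow_card_le hC l m ha hw).trans (by linarith [Real.add_one_le_exp δ])
  calc _ = ∏ _T : Fin (2 * L), ∏ m, ∑ B ∈ cellContents J seq l m, a ^ #B := by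
        rw [sum_prod_piFinset _ fun _ (B : M → Finset (ι × ℕ)) => ∏ m, a ^ #(B m)]
        exact prod_congr rfl fun _ _ => (prod_univ_sum _ fun _ B => a ^ #B).symm
    _ ≤ ∏ _T : Fin (2 * L), ∏ _m : M, Real.exp δ := by
        gcongr
        exact hcell _
    _ = Real.exp (2 * L * Fintype.card M * δ) := by
        simp only [prod_const, card_univ, Fintype.card_fin, ← Real.exp_nat_mul]
        push_cast
        ring_nf

lemma IsBadPatternOn.uniformProb_patternOccursOn_le [Finite ι] {J : Finset ι}
    {seq : ι → List M} {L l : ℕ} (hL : 0 < L) {B : Fin (2 * L) → M → Finset (ι × ℕ)}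
    (hB : IsBadPatternOn J seq L l B) :
    uniformProb (PatternOccursOn B) ≤ ((L : ℝ)⁻¹) ^ ∑ T, ∑ m, #(B T m) := by
  have : Nonempty (Fin L) := Fin.pos_iff_nonempty.1 hL
  let entries := (univ : Finset (Fin (2 * L) × M)).sigma fun x => B x.1 x.2
  have hinj : Set.InjOn (fun c : Σ _ : Fin (2 * L) × M, ι × ℕ => c.2.1) entries := by
    rintro ⟨⟨T, m⟩, p⟩ hp ⟨⟨T', m'⟩, p'⟩ hp' hjob
    obtain ⟨rfl, rfl, rfl⟩ := hB.2.1 T m T' m' p (mem_sigma.1 hp).2 p' (mem_sigma.1 hp').2 hjob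
    rfl
  have hcard : #entries = ∑ T, ∑ m, #(B T m) := by
    rw [card_sigma, Fintype.sum_prod_type]
  calc uniformProb (PatternOccursOn B)
      ≤ uniformProb fun h : ι → Fin L =>
          ∀ c ∈ entries, (h c.2.1 : ℕ) + c.2.2 = (c.1.1 : ℕ) :=
        uniformProb_mono fun h hoccurs c hc => hoccurs _ _ _ (mem_sigma.1 hc).2
    _ = ∏ c ∈ entries, uniformProb fun y : Fin L => (y : ℕ) + c.2.2 = (c.1.1 : ℕ) :=
        uniformProb_forall_mem_apply hinj fun c (y : Fin L) => (y : ℕ) + c.2.2 = (c.1.1 : ℕ)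
    _ ≤ ∏ _c ∈ entries, (L : ℝ)⁻¹ := by
        refine prod_le_prod (fun _ _ => uniformProb_nonneg _) fun c _ => ?_
        simpa using uniformProb_eq_le_inv_card
          ((add_left_injective c.2.2).comp (Fin.val_injective (n := L))) (c.1.1 : ℕ)
    _ = ((L : ℝ)⁻¹) ^ ∑ T, ∑ m, #(B T m) := by
        rw [prod_const, hcard]

lemma IsBadPatternOn.uniformProb_patternOccursOn_le_mul [Finite ι] {J : Finset ι}
    {seq : ι → List M} {L l : ℕ} (hL : 0 < L) {B : Fin (2 * L) → M → Finset (ι × ℕ)}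
    (hB : IsBadPatternOn J seq L l B) {s : ℝ} (hs : 1 ≤ s) :
    uniformProb (PatternOccursOn B) ≤ (s ^ #J)⁻¹ * ∏ T, ∏ m, (s ^ 2 / L) ^ #(B T m) := by
  refine (hB.uniformProb_patternOccursOn_le hL).trans ?_
  simp only [prod_pow_eq_pow_sum]
  set N := ∑ T, ∑ m, #(B T m)
  have hsize : s ^ #J ≤ s ^ (2 * N) := pow_le_pow_right₀ hs hB.2.2.2.le
  rw [inv_mul_eq_div, le_div_iff₀ (by positivity), div_eq_inv_mul, mul_pow, ← pow_mul]
  gcongr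

lemma uniformProb_not_isGoodHashOn_le [DecidableEq M] [Finite ι] {J : Finset ι}
    {seq : ι → List M} {L : ℕ} (hL : 0 < L) (hC : congestionOn J seq ≤ L) (l : ℕ) {s w : ℝ}
    (hs : 1 ≤ s) (hw : 1 ≤ w) :
    uniformProb (fun h => ¬IsGoodHashOn J seq L l h) ≤
      (s ^ #J)⁻¹ *
        Real.exp (2 * L * Fintype.card M * ((w ^ l)⁻¹ * Real.exp (s ^ 2 * w))) := by
  classical
  let patterns := Fintype.piFinset fun _ : Fin (2 * L) => Fintype.piFinset (cellContents J seq l)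
  calc uniformProb (fun h => ¬IsGoodHashOn J seq L l h)
      ≤ uniformProb (fun h => ∃ B ∈ patterns.filter (IsBadPatternOn J seq L l),
          PatternOccursOn B h) := by
        refine uniformProb_mono fun h hh => ?_
        simp only [IsGoodHashOn, not_forall, not_not] at hh
        obtain ⟨B, hB, hoccurs⟩ := hh
        have hmem : B ∈ patterns := Fintype.mem_piFinset.2 fun T =>
          Fintype.mem_piFinset.2 (hB.mem_cellContents T)
        exact ⟨B, mem_filter.2 ⟨hmem, hB⟩, hoccurs⟩
    _ ≤ ∑ B ∈ patterns with IsBadPatternOn J seq L l B, uniformProb (PatternOccursOn B) :=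
        uniformProb_exists_mem_le_sum _ _
    _ ≤ ∑ B ∈ patterns with IsBadPatternOn J seq L l B,
          (s ^ #J)⁻¹ * ∏ T, ∏ m, (s ^ 2 / L) ^ #(B T m) :=
        sum_le_sum fun B hB => (mem_filter.1 hB).2.uniformProb_patternOccursOn_le_mul hL hs
    _ ≤ ∑ B ∈ patterns, (s ^ #J)⁻¹ * ∏ T, ∏ m, (s ^ 2 / L) ^ #(B T m) :=
        sum_le_sum_of_subset_of_nonneg (filter_subset _ _) fun B _ _ => by positivity
    _ ≤ _ := by
        rw [← mul_sum]
        gcongr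
        have hLs : L * (s ^ 2 / L * w) = s ^ 2 * w := by
          field_simp
        rw [← hLs]
        exact sum_piFinset_cellContents_prod_pow_card_le hC l (by positivity) hw

lemma uniformProb_not_isGoodHashOn_le_rpow [DecidableEq M] [Finite ι] {J : Finset ι}
    (hJ : J.Nonempty) {seq : ι → List M} {L l : ℕ} (hL : 0 < L) (hC : congestionOn J seq ≤ L)
    (hl : 256 ≤ l) (hcells : 4 * L * Fintype.card M * (Real.exp 1 / √l) ^ l ≤ 1) :
    uniformProb (fun h => ¬IsGoodHashOn J seq L l h) ≤ ((l : ℝ) ^ (-1 / 8 : ℝ)) ^ #J := by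
  have hl0 : (0 : ℝ) < l := mod_cast (by linarith : 0 < l)
  set r : ℝ := (l : ℝ) ^ (1 / 8 : ℝ) with hr
  have hr8 : r ^ 8 = l := by
    rw [hr, ← Real.rpow_mul_natCast hl0.le]
    norm_num
  have hr2 : 2 ≤ r := by
    refine le_of_pow_le_pow_left₀ (n := 8) (by norm_num) (by positivity) ?_
    rw [hr8]
    exact_mod_cast hl
  have hsqrt : √l = r ^ 4 := by
    rw [Real.sqrt_eq_iff_mul_self_eq hl0.le (by positivity), ← hr8]
    ring
  have hrinv : (l : ℝ) ^ (-1 / 8 : ℝ) = r⁻¹ := by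
    rw [hr, ← Real.rpow_neg hl0.le]
    norm_num
  have htail : ((r ^ 4) ^ l)⁻¹ * Real.exp ((r ^ 2) ^ 2 * r ^ 4) = (Real.exp 1 / √l) ^ l := by
    rw [hsqrt, div_pow, ← Real.exp_nat_mul, ← hr8]
    ring_nf
  have hexp : Real.exp (2 * L * Fintype.card M * (Real.exp 1 / √l) ^ l) ≤ 2 := by
    rw [← Real.le_log_iff_exp_le two_pos]
    linarith [Real.log_two_gt_d9]
  have hrJ : 2 ≤ r ^ #J := hr2.trans (le_self_pow₀ (by linarith) hJ.card_ne_zero)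
  calc uniformProb (fun h => ¬IsGoodHashOn J seq L l h)
      ≤ ((r ^ 2) ^ #J)⁻¹ * Real.exp (2 * L * Fintype.card M * (Real.exp 1 / √l) ^ l) := by
        rw [← htail]
        exact uniformProb_not_isGoodHashOn_le hL hC l (one_le_pow₀ (by linarith))
          (one_le_pow₀ (by linarith))
    _ ≤ ((r ^ 2) ^ #J)⁻¹ * r ^ #J := by
        gcongr
        exact hexp.trans hrJ
    _ = ((l : ℝ) ^ (-1 / 8 : ℝ)) ^ #J := by
        rw [hrinv, inv_pow, pow_right_comm, sq, mul_inv, inv_mul_cancel_right₀ (by positivity)]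

end Patterns

section Families

variable {M ι : Type*} [Fintype M] [DecidableEq M]

/-- Every job set of congestion at most `L` whose jobs are taken from `ι` has a good function in the
family `g`. In contrast to `IsGoodFamily`, two jobs may share an identifier and the dilation is
unrestricted. -/
def IsGoodFamilyOn {κ : Type*} (seq : ι → List M) (L l : ℕ) (g : κ → ι → Fin L) : Prop :=
  ∀ J : Finset ι, congestionOn J seq ≤ L → ∃ i, IsGoodHashOn J seq L l (g i)

lemma IsGoodFamilyOn.isGoodFamily {I : Type*} [Fintype I] {S : Finset (List M)} {L l k : ℕ}
    {g : Fin k → ↥S × I → Fin L} (hg : IsGoodFamilyOn (fun p => (p.1 : List M)) L l g) :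
    IsGoodFamily S L l k g :=
  fun J _ hJ => hg J (le_of_add_le_left hJ)

lemma uniformProb_not_isGoodFamilyOn_le {κ : Type*} [Fintype κ] [Nonempty κ] [Fintype ι]
    (seq : ι → List M) (L l : ℕ) {q : ℝ} (hq : 0 ≤ q)
    (hbad : ∀ J : Finset ι, J.Nonempty → congestionOn J seq ≤ L →
      uniformProb (fun h => ¬IsGoodHashOn J seq L l h) ≤ q ^ #J) :
    uniformProb (fun g : κ → ι → Fin L => ¬IsGoodFamilyOn seq L l g) ≤
      Real.exp (Fintype.card ι * q ^ Fintype.card κ) - 1 := by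
  classical
  let jobSets : Finset (Finset ι) := {J | J.Nonempty ∧ congestionOn J seq ≤ L}
  calc uniformProb (fun g : κ → ι → Fin L => ¬IsGoodFamilyOn seq L l g)
      ≤ uniformProb (fun g : κ → ι → Fin L =>
          ∃ J ∈ jobSets, ∀ i, ¬IsGoodHashOn J seq L l (g i)) := by
        refine uniformProb_mono fun g hg => ?_
        simp only [IsGoodFamilyOn, not_forall, not_exists] at hg
        obtain ⟨J, hC, hJ⟩ := hg
        have hne : J.Nonempty := by
          rw [nonempty_iff_ne_empty]
          rintro rfl
          exact hJ (Classical.arbitrary κ) fun B hB => absurd hB (not_isBadPatternOn_empty _ _ _ B)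
        exact ⟨J, by simpa [jobSets] using ⟨hne, hC⟩, hJ⟩
    _ ≤ ∑ J ∈ jobSets,
          uniformProb (fun g : κ → ι → Fin L => ∀ i, ¬IsGoodHashOn J seq L l (g i)) :=
        uniformProb_exists_mem_le_sum _ _
    _ = ∑ J ∈ jobSets, uniformProb (fun h => ¬IsGoodHashOn J seq L l h) ^ Fintype.card κ := by
        refine sum_congr rfl fun J _ => ?_
        rw [uniformProb_forall_apply fun _ h => ¬IsGoodHashOn J seq L l h, prod_const, card_univ]
    _ ≤ ∑ J ∈ jobSets, (q ^ Fintype.card κ) ^ #J := by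
        refine sum_le_sum fun J hJ => ?_
        obtain ⟨hne, hC⟩ := (mem_filter.1 hJ).2
        rw [← pow_mul, mul_comm, pow_mul]
        exact pow_le_pow_left₀ (uniformProb_nonneg _) (hbad J hne hC) _
    _ ≤ ∑ J : Finset ι with J.Nonempty, (q ^ Fintype.card κ) ^ #J :=
        sum_le_sum_of_subset_of_nonneg
          (monotone_filter_right _ fun J _ hJ => hJ.1) fun J _ _ => by positivity
    _ ≤ Real.exp (Fintype.card ι * q ^ Fintype.card κ) - 1 :=
        sum_nonempty_pow_card_le_exp_sub_one (by positivity)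

end Families

section Parameters

lemma log_le_half_self {x : ℝ} (hx : 0 < x) : Real.log x ≤ x / 2 := by
  have hlog := Real.log_le_sub_one_of_pos (half_pos hx)
  rw [Real.log_div hx.ne' two_ne_zero] at hlog
  linarith [Real.log_two_lt_d9]

lemma three_le_log {x : ℝ} (hx : 32 ≤ x) : 3 ≤ Real.log x := by
  have hlog : Real.log (2 ^ 5) ≤ Real.log x := Real.log_le_log (by norm_num) (by linarith)
  rw [Real.log_pow] at hlog
  push_cast at hlog
  linarith [Real.log_two_gt_d9]

lemma one_le_log {x : ℝ} (hx : 3 ≤ x) : 1 ≤ Real.log x :=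
  (Real.le_log_iff_exp_le (by linarith)).2 (by linarith [Real.exp_one_lt_d9])

lemma two_mul_le_of_mul_div_log_le {a x y : ℝ} (ha : 0 ≤ a) (hx : 3 ≤ x)
    (hy : a * x / Real.log x ≤ y) : 2 * a ≤ y := by
  have hlog := one_le_log hx
  refine le_trans ?_ hy
  rw [le_div_iff₀ (by linarith)]
  calc 2 * a * Real.log x ≤ 2 * a * (x / 2) := by
        gcongr
        exact log_le_half_self (by linarith)
    _ = a * x := by ring

lemma log_add_half_log_le_log {a x y : ℝ} (ha : 0 < a) (hx : 3 ≤ x)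
    (hy : a * x / Real.log x ≤ y) : Real.log a + Real.log x / 2 ≤ Real.log y := by
  have hlog : 0 < Real.log x := by linarith [one_le_log hx]
  have hx0 : 0 < x := by linarith
  have hloglog := log_le_half_self hlog
  have hlogy := Real.log_le_log (by positivity) hy
  rw [Real.log_div (by positivity) hlog.ne', Real.log_mul ha.ne' hx0.ne'] at hlogy
  linarith

lemma mul_div_four_le_mul_half_log_sub_one {a x y : ℝ} (ha : 9 ≤ a) (hx : 3 ≤ x)
    (hy : a * x / Real.log x ≤ y) : a * x / 4 ≤ y * (Real.log y / 2 - 1) := by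
  have hlog := one_le_log hx
  have hloga : 2 ≤ Real.log a := by
    rw [Real.le_log_iff_exp_le (by linarith), show (2 : ℝ) = 1 + 1 by norm_num, Real.exp_add]
    nlinarith [Real.exp_one_lt_d9, Real.exp_pos 1]
  have hlogy := log_add_half_log_le_log (by linarith) hx hy
  have hy0 : 0 ≤ y := by linarith [two_mul_le_of_mul_div_log_le (by linarith) hx hy]
  calc a * x / 4 ≤ y * (Real.log x / 4) := by
        rw [div_le_iff₀ (by linarith)] at hy
        linarith
    _ ≤ y * (Real.log y / 2 - 1) := by
        gcongr
        linarith

lemma exp_one_div_sqrt_pow_self {l : ℕ} (hl : 0 < l) :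
    (Real.exp 1 / √l) ^ l = Real.exp (-(l * (Real.log l / 2 - 1))) := by
  have hl0 : (0 : ℝ) < l := mod_cast hl
  rw [Real.sqrt_eq_rpow, Real.rpow_def_of_pos hl0, ← Real.exp_sub, ← Real.exp_nat_mul]
  ring_nf

variable {n c : ℝ} {L l : ℕ}

lemma le_of_mul_log_div_log_log_le (hn : 32 ≤ n) (hc : 1 ≤ c)
    (hl : 150 * c * Real.log n / Real.log (Real.log n) ≤ (l : ℝ)) : 256 ≤ l := by
  have h := two_mul_le_of_mul_div_log_le (by positivity) (three_le_log hn) hl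
  have : (256 : ℝ) ≤ l := by linarith
  exact_mod_cast this

lemma four_mul_mul_exp_one_div_sqrt_pow_le_one (hn : 32 ≤ n) (hc : 1 ≤ c)
    (hL : (L : ℝ) ≤ 2 * n ^ c)
    (hl : 150 * c * Real.log n / Real.log (Real.log n) ≤ (l : ℝ)) :
    4 * L * n * (Real.exp 1 / √l) ^ l ≤ 1 := by
  have hn0 : 0 < n := by linarith
  have hl256 := le_of_mul_log_div_log_log_le hn hc hl
  have hlog := three_le_log hn
  have hexponent : 3 * c * Real.log n ≤ l * (Real.log l / 2 - 1) := by
    have := mul_div_four_le_mul_half_log_sub_one (by linarith) hlog hl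
    have : 0 ≤ c * Real.log n := by positivity
    linarith
  have hdecay : (Real.exp 1 / √l) ^ l ≤ n ^ (-(3 * c)) := by
    rw [exp_one_div_sqrt_pow_self (by linarith), Real.rpow_def_of_pos hn0]
    gcongr
    linarith
  calc 4 * L * n * (Real.exp 1 / √l) ^ l
      ≤ 4 * (2 * n ^ c) * n * n ^ (-(3 * c)) := by gcongr
    _ = 8 * n ^ (c + 1 + -(3 * c)) := by
        rw [Real.rpow_add hn0, Real.rpow_add_one hn0.ne']
        ring
    _ ≤ 8 * n ^ (-1 : ℝ) := by
        gcongr <;> linarith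
    _ ≤ 1 := by
        rw [Real.rpow_neg_one, ← div_eq_mul_inv, div_le_one hn0]
        linarith

lemma mul_mul_rpow_le_rpow_div {x y b : ℝ} {k : ℕ} (hn : 1 ≤ n) (hx : 1 ≤ x) (hy : y ≤ n ^ c)
    (hc : 0 ≤ c) (hb : 0 ≤ b) (hl : 1 < l)
    (hk : 8 * (b + 1) * (Real.log x + (c + 1) * Real.log n) / Real.log l ≤ (k : ℝ)) :
    x * y * n ^ b ≤ (l : ℝ) ^ ((k : ℝ) / 8) := by
  have hn0 : 0 < n := by linarith
  have hl0 : (0 : ℝ) < l := mod_cast (by linarith : 0 < l)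
  have hlogl : 0 < Real.log l := Real.log_pos (mod_cast hl)
  have hlogx : 0 ≤ Real.log x := Real.log_nonneg hx
  have hlogn : 0 ≤ Real.log n := Real.log_nonneg hn
  rw [div_le_iff₀ hlogl] at hk
  calc x * y * n ^ b ≤ x * n ^ c * n ^ b := by gcongr
    _ = Real.exp (Real.log x + Real.log n * c + Real.log n * b) := by
        rw [Real.exp_add, Real.exp_add, Real.exp_log (by linarith), Real.rpow_def_of_pos hn0,
          Real.rpow_def_of_pos hn0]
    _ ≤ Real.exp (Real.log l * (k / 8)) := by
        gcongr
        have : 0 ≤ b * Real.log x := by positivity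
        have : 0 ≤ b * c * Real.log n := by positivity
        linarith
    _ = (l : ℝ) ^ ((k : ℝ) / 8) := (Real.rpow_def_of_pos hl0 _).symm

lemma mul_rpow_neg_div_pow_le_rpow_neg {N x b : ℝ} {k : ℕ} (hn : 0 < n) (hx : 0 < x)
    (hk : N * n ^ b ≤ x ^ ((k : ℝ) / 8)) : N * (x ^ (-1 / 8 : ℝ)) ^ k ≤ n ^ (-b) := by
  have hpow : (x ^ (-1 / 8 : ℝ)) ^ k = (x ^ ((k : ℝ) / 8))⁻¹ := by
    rw [← Real.rpow_mul_natCast hx.le, ← Real.rpow_neg hx.le]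
    ring_nf
  rw [hpow, Real.rpow_neg hn.le, ← div_eq_mul_inv, div_le_iff₀ (by positivity),
    inv_mul_eq_div, le_div_iff₀ (by positivity)]
  exact hk

end Parameters

theorem prob_family_good_ge_general {M ι : Type*} [Fintype M] [DecidableEq M] [Fintype ι]
    (c : ℝ) (hc : 1 ≤ c) (hM : 32 ≤ Fintype.card M) (seq : ι → List M)
    (L l : ℕ) (hL0 : 0 < L) (hL : (L : ℝ) ≤ 2 * (Fintype.card M : ℝ) ^ c)
    (hl : 150 * c * Real.log (Fintype.card M) / Real.log (Real.log (Fintype.card M)) ≤ (l : ℝ))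
    (b : ℝ) (hb : 0 ≤ b) (k : ℕ) (hk0 : 0 < k)
    (hk : Fintype.card ι * (Fintype.card M : ℝ) ^ b ≤ (l : ℝ) ^ ((k : ℝ) / 8)) :
    1 - 2 * (Fintype.card M : ℝ) ^ (-b) ≤
      uniformProb (fun g : Fin k → ι → Fin L => IsGoodFamilyOn seq L l g) := by
  have : Nonempty (Fin L) := Fin.pos_iff_nonempty.1 hL0
  have : Nonempty (Fin k) := Fin.pos_iff_nonempty.1 hk0
  have hM32 : (32 : ℝ) ≤ Fintype.card M := mod_cast hM
  have hM0 : (0 : ℝ) < Fintype.card M := by linarith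
  set t : ℝ := (Fintype.card M : ℝ) ^ (-b)
  have ht0 : 0 < t := by positivity
  have ht1 : t ≤ 1 := Real.rpow_le_one_of_one_le_of_nonpos (by linarith) (by linarith)
  have hl256 := le_of_mul_log_div_log_log_le hM32 hc hl
  have hl0 : (0 : ℝ) < l := mod_cast (by linarith : 0 < l)
  have hcells := four_mul_mul_exp_one_div_sqrt_pow_le_one hM32 hc hL hl
  have hbad := uniformProb_not_isGoodFamilyOn_le (κ := Fin k) seq L l (by positivity)
    fun J hJ hC => uniformProb_not_isGoodHashOn_le_rpow hJ hL0 hC hl256 hcells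
  have hexponent : Fintype.card ι * ((l : ℝ) ^ (-1 / 8 : ℝ)) ^ k ≤ t :=
    mul_rpow_neg_div_pow_le_rpow_neg hM0 hl0 hk
  have hexp : Real.exp t - 1 ≤ 2 * t := by
    have h := Real.abs_exp_sub_one_le (x := t) (by rwa [abs_of_pos ht0])
    rw [abs_of_pos ht0] at h
    exact (le_abs_self _).trans h
  rw [uniformProb_eq_one_sub]
  rw [Fintype.card_fin] at hbad
  linarith [Real.exp_le_exp.2 hexponent]

/-- Let `|M| ≥ 32`, `c ≥ 1`, `|I| = ⌊|M|^c⌋`, `S` a nonempty finite set of machine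
sequences, `L ≤ 2·|M|^c`, `l ≥ 150·c·ln|M| / ln ln|M|`, `b ≥ 1` and
`k ≥ 8·(b+1)·(ln|S| + (c+1)·ln|M|) / ln(l)`. If `g_1, …, g_k` are independent uniformly
random functions from `S × I` to `{0,…,L−1}` (modelled as a uniformly random tuple
`g : Fin k → (↥S × I → Fin L)`), then with probability at least `1 − 2·|M|^(−b)` the
family `(g_1, …, g_k)` is `(L,l)`-good for `S`. -/
theorem prob_family_good_ge {M I : Type*} [Fintype M] [DecidableEq M] [Fintype I]
    (c : ℝ) (hc : 1 ≤ c) (hM : 32 ≤ Fintype.card M)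
    (hI : Fintype.card I = ⌊(Fintype.card M : ℝ) ^ c⌋₊)
    (S : Finset (List M)) (hS : S.Nonempty)
    (L l : ℕ) (hL0 : 0 < L) (hl0 : 0 < l)
    (hL : (L : ℝ) ≤ 2 * (Fintype.card M : ℝ) ^ c)
    (hl : 150 * c * Real.log (Fintype.card M) / Real.log (Real.log (Fintype.card M)) ≤ (l : ℝ))
    (b : ℝ) (hb : 1 ≤ b) (k : ℕ) (hk0 : 0 < k)
    (hk : 8 * (b + 1) * (Real.log (S.card : ℝ) + (c + 1) * Real.log (Fintype.card M)) /
        Real.log l ≤ (k : ℝ)) :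
    1 - 2 * (Fintype.card M : ℝ) ^ (-b) ≤
      (Nat.card {g : Fin k → (↥S × I → Fin L) // IsGoodFamily S L l k g} : ℝ) /
        (Nat.card (Fin k → (↥S × I → Fin L)) : ℝ) := by
  have hM32 : (32 : ℝ) ≤ Fintype.card M := mod_cast hM
  have hl256 := le_of_mul_log_div_log_log_le hM32 hc hl
  have hIcard : (Fintype.card I : ℝ) ≤ (Fintype.card M : ℝ) ^ c :=
    hI ▸ Nat.floor_le (by positivity)
  have hjobs := mul_mul_rpow_le_rpow_div (by linarith) (mod_cast hS.card_pos) hIcard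
    (by linarith) (by linarith) (by linarith) hk
  refine (prob_family_good_ge_general c hc hM (fun p : ↥S × I => (p.1 : List M)) L l hL0 hL hl
    b (by linarith) k hk0 (by simpa using hjobs)).trans ?_
  exact uniformProb_mono fun g hg => hg.isGoodFamily
end

section
/- Fix a finite machine set M, a job set J over M, positive integers L and l, a function h : J → {0,…,L−1}, and a time horizon t_max. In any greedy weak-scheduler execution up to time t_max, for all times t' ≤ t ≤ t_max and every job j ∈ J: if j is behind schedule at time t' (that is, pos_{t'}(j) < len(j) and h(j) + pos_{t'}(j) < ⌊t'/l⌋), then st_t(j) = 1 (the job is eliminated at time t). -/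
open Finset

/-- A greedy weak-scheduler execution up to time `tmax`, for the job set given by the
finite type `J` with machine sequences `seq : J → List M`, small time step count `l`, and
hash function `h : J → Fin L`. `pos t j` is the position of job `j` at time `t` and
`st t j ∈ {0,1}` its state (`1` = eliminated). At each step `t → t+1` an adversary first
pushes jobs forward to positions `pos'`; with `T := ⌊t/l⌋` and
`Q m := { j : st t j = 0, pos' j < len j, seq(j)_{pos' j} = m, h j + pos' j = T }`:
if `t ≡ 0 (mod l)` and `|Q m| > l` every `j ∈ Q m` is dropped (`st (t+1) j = 1`);
if `0 < |Q m| ≤ l` machine `m` works on exactly one job of `Q m` (its position is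
incremented from `pos'`); all other jobs keep their pushed positions, and all jobs not
dropped keep their states. -/
def IsGreedyExec {M J : Type*} [Fintype M] [DecidableEq M] [Fintype J]
    (seq : J → List M) {L : ℕ} (l : ℕ) (h : J → Fin L) (tmax : ℕ)
    (pos : ℕ → J → ℕ) (st : ℕ → J → Fin 2) : Prop :=
  (∀ t ≤ tmax, ∀ j, pos t j ≤ (seq j).length) ∧
  (∀ j, st 0 j = 0) ∧
  (∀ t < tmax, ∃ pos' : J → ℕ,
    (∀ j, pos t j ≤ pos' j ∧ pos' j ≤ (seq j).length) ∧
    (let Q : M → Finset J := fun m =>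
      Finset.univ.filter fun j =>
        st t j = 0 ∧ pos' j < (seq j).length ∧ (seq j)[pos' j]? = some m ∧
          (h j : ℕ) + pos' j = t / l
     ∃ worksel : M → Option J,
      (∀ m j, worksel m = some j → j ∈ Q m ∧ (Q m).card ≤ l) ∧
      (∀ m, 0 < (Q m).card → (Q m).card ≤ l → (worksel m).isSome) ∧
      (∀ j, (∃ m, worksel m = some j) → pos (t + 1) j = pos' j + 1) ∧
      (∀ j, (¬ ∃ m, worksel m = some j) → pos (t + 1) j = pos' j) ∧
      (∀ j, (t % l = 0 ∧ ∃ m, l < (Q m).card ∧ j ∈ Q m) → st (t + 1) j = 1) ∧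
      (∀ j, (¬ (t % l = 0 ∧ ∃ m, l < (Q m).card ∧ j ∈ Q m)) → st (t + 1) j = st t j)))

/-! Call a live, unfinished job `j` due in large step `T` if `h j + pos j = T`. Suppose that at the
start of large step `T` no live job is behind. Then pushing cannot make a job due, so the queue of
each machine only shrinks during the step. A queue of more than `l` jobs is dropped at once. Any
other nonempty queue loses a job in each of the `l` small steps, because the job that is worked on
becomes due only later. Hence all queues are empty at the end of large step `T`, and no live job is
behind when step `T + 1` starts. -/

section

variable {M J : Type*}

/-- No live unfinished job is behind large time step `T`. -/
def NoLiveBehind (seq : J → List M) (h : J → ℕ) (T : ℕ) (pos : J → ℕ) (st : J → Fin 2) : Prop :=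
  ∀ j, st j = 0 → pos j < (seq j).length → T ≤ h j + pos j

variable [DecidableEq M] [Fintype J]

/-- The set `Q_m` of live unfinished jobs due on machine `m` in large time step `T`. -/
def machineQueue (seq : J → List M) (h : J → ℕ) (T : ℕ) (pos : J → ℕ) (st : J → Fin 2) (m : M) :
    Finset J :=
  univ.filter fun j =>
    st j = 0 ∧ pos j < (seq j).length ∧ (seq j)[pos j]? = some m ∧ h j + pos j = T

/-- Job `j` is dropped in the small time step from `t`, when `pos` are the pushed positions: a large
time step begins and the queue of `j` is overfull. -/
def IsDropped (seq : J → List M) (h : J → ℕ) (l t : ℕ) (pos : J → ℕ) (st : J → Fin 2) (j : J) :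
    Prop :=
  t % l = 0 ∧ ∃ m, l < #(machineQueue seq h (t / l) pos st m) ∧
    j ∈ machineQueue seq h (t / l) pos st m

/-- One small time step `t → t + 1` of the greedy weak scheduler, from `(pos, st)` to `(pos₁, st₁)`.
The adversary's pushed positions and the jobs the machines work on are parameters; machine `m` is
idle when `work m = none`. -/
structure IsGreedyStep (seq : J → List M) (h : J → ℕ) (l t : ℕ) (pushed : J → ℕ)
    (work : M → Option J) (pos : J → ℕ) (st : J → Fin 2) (pos₁ : J → ℕ) (st₁ : J → Fin 2) :
    Prop where
  le_pushed_le_length : ∀ j, pos j ≤ pushed j ∧ pushed j ≤ (seq j).length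
  mem_of_work : ∀ m j, work m = some j → j ∈ machineQueue seq h (t / l) pushed st m ∧
    #(machineQueue seq h (t / l) pushed st m) ≤ l
  work_isSome : ∀ m, 0 < #(machineQueue seq h (t / l) pushed st m) →
    #(machineQueue seq h (t / l) pushed st m) ≤ l → (work m).isSome
  pos_of_work : ∀ j, (∃ m, work m = some j) → pos₁ j = pushed j + 1
  pos_of_not_work : ∀ j, (¬ ∃ m, work m = some j) → pos₁ j = pushed j
  st_of_drop : ∀ j, IsDropped seq h l t pushed st j → st₁ j = 1
  st_of_not_drop : ∀ j, ¬ IsDropped seq h l t pushed st j → st₁ j = st j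

/-- The invariant of the execution at time `t`: no live job is behind, and after `t % l ≠ 0` small
steps of the current large step every queue fits into the remaining ones. The bound is not required
at `t % l = 0`, where overfull queues have not been dropped yet. -/
structure IsOnTrack (seq : J → List M) (h : J → ℕ) (l t : ℕ) (pos : J → ℕ) (st : J → Fin 2) :
    Prop where
  noLiveBehind : NoLiveBehind seq h (t / l) pos st
  card_add_le : t % l ≠ 0 → ∀ m, #(machineQueue seq h (t / l) pos st m) + t % l ≤ l

section

variable {seq : J → List M} {h : J → ℕ} {T l t : ℕ} {pushed pos pos₁ : J → ℕ}
  {work : M → Option J} {st st₁ : J → Fin 2} {j : J} {m : M}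

theorem mem_machineQueue :
    j ∈ machineQueue seq h T pos st m ↔
      st j = 0 ∧ pos j < (seq j).length ∧ (seq j)[pos j]? = some m ∧ h j + pos j = T := by
  simp only [machineQueue, mem_filter, mem_univ, true_and]

theorem NoLiveBehind.succ (hT : NoLiveBehind seq h T pos st)
    (hempty : ∀ m, machineQueue seq h T pos st m = ∅) : NoLiveBehind seq h (T + 1) pos st := by
  intro j hlive hlen
  refine (hT j hlive hlen).lt_of_ne fun hdue => ?_
  have hmem : j ∈ machineQueue seq h T pos st (seq j)[pos j] :=
    mem_machineQueue.2 ⟨hlive, hlen, List.getElem?_eq_getElem hlen, hdue.symm⟩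
  rw [hempty] at hmem
  exact notMem_empty j hmem

theorem NoLiveBehind.machineQueue_subset_of_le (hT : NoLiveBehind seq h T pos st)
    (hle : ∀ j, pos j ≤ pushed j) (m : M) :
    machineQueue seq h T pushed st m ⊆ machineQueue seq h T pos st m := by
  intro j hj
  obtain ⟨hlive, hlen, hm, hdue⟩ := mem_machineQueue.1 hj
  have hnotBehind := hT j hlive ((hle j).trans_lt hlen)
  have hpos : pos j = pushed j := by
    have := hle j
    omega
  rw [mem_machineQueue, hpos]
  exact ⟨hlive, hlen, hm, hdue⟩

namespace IsGreedyStep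

theorem pos_le (step : IsGreedyStep seq h l t pushed work pos st pos₁ st₁) (j : J) :
    pos j ≤ pos₁ j := by
  have hpush := (step.le_pushed_le_length j).1
  by_cases hwork : ∃ m, work m = some j
  · rw [step.pos_of_work j hwork]
    omega
  · rwa [step.pos_of_not_work j hwork]

theorem not_isDropped_of_live (step : IsGreedyStep seq h l t pushed work pos st pos₁ st₁)
    (hlive : st₁ j = 0) : ¬ IsDropped seq h l t pushed st j :=
  fun hdrop => zero_ne_one (hlive.symm.trans (step.st_of_drop j hdrop))

theorem live_of_live (step : IsGreedyStep seq h l t pushed work pos st pos₁ st₁)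
    (hlive : st₁ j = 0) : st j = 0 :=
  (step.st_of_not_drop j (step.not_isDropped_of_live hlive)).symm.trans hlive

theorem noLiveBehind (step : IsGreedyStep seq h l t pushed work pos st pos₁ st₁)
    (hT : NoLiveBehind seq h T pos st) : NoLiveBehind seq h T pos₁ st₁ :=
  fun j hlive hlen =>
    have hpos := step.pos_le j
    (hT j (step.live_of_live hlive) (hpos.trans_lt hlen)).trans (Nat.add_le_add_left hpos _)

theorem not_work_of_mem_machineQueue (step : IsGreedyStep seq h l t pushed work pos st pos₁ st₁)
    (hj : j ∈ machineQueue seq h (t / l) pos₁ st₁ m) :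
    ¬ ∃ m', work m' = some j := by
  rintro ⟨m', hm'⟩
  obtain ⟨-, -, -, hdue⟩ := mem_machineQueue.1 (step.mem_of_work m' j hm').1
  obtain ⟨-, -, -, hdue₁⟩ := mem_machineQueue.1 hj
  rw [step.pos_of_work j ⟨m', hm'⟩] at hdue₁
  omega

theorem machineQueue_subset (step : IsGreedyStep seq h l t pushed work pos st pos₁ st₁) (m : M) :
    machineQueue seq h (t / l) pos₁ st₁ m ⊆ machineQueue seq h (t / l) pushed st m := by
  intro j hj
  have hpos := step.pos_of_not_work j (step.not_work_of_mem_machineQueue hj)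
  obtain ⟨hlive, hrest⟩ := mem_machineQueue.1 hj
  rw [hpos] at hrest
  exact mem_machineQueue.2 ⟨step.live_of_live hlive, hrest⟩

theorem card_machineQueue_lt (step : IsGreedyStep seq h l t pushed work pos st pos₁ st₁)
    (hne : (machineQueue seq h (t / l) pushed st m).Nonempty)
    (hle : #(machineQueue seq h (t / l) pushed st m) ≤ l) :
    #(machineQueue seq h (t / l) pos₁ st₁ m) < #(machineQueue seq h (t / l) pushed st m) := by
  obtain ⟨i, hi⟩ := Option.isSome_iff_exists.1 (step.work_isSome m hne.card_pos hle)
  refine card_lt_card ((ssubset_iff_of_subset (step.machineQueue_subset m)).2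
    ⟨i, (step.mem_of_work m i hi).1, fun hmem => ?_⟩)
  exact step.not_work_of_mem_machineQueue hmem ⟨m, hi⟩

theorem card_machineQueue_pushed_add_le (step : IsGreedyStep seq h l t pushed work pos st pos₁ st₁)
    (htrack : IsOnTrack seq h l t pos st)
    (hj : j ∈ machineQueue seq h (t / l) pos₁ st₁ m) :
    #(machineQueue seq h (t / l) pushed st m) + t % l ≤ l := by
  by_cases hstart : t % l = 0
  · rw [hstart, add_zero]
    by_contra! hover
    exact step.not_isDropped_of_live (mem_machineQueue.1 hj).1
      ⟨hstart, m, hover, step.machineQueue_subset m hj⟩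
  · have hsub := htrack.noLiveBehind.machineQueue_subset_of_le
      (fun j => (step.le_pushed_le_length j).1) m
    exact (Nat.add_le_add_right (card_le_card hsub) _).trans (htrack.card_add_le hstart m)

theorem card_machineQueue_add_lt (step : IsGreedyStep seq h l t pushed work pos st pos₁ st₁)
    (hl : 0 < l) (htrack : IsOnTrack seq h l t pos st) (m : M) :
    #(machineQueue seq h (t / l) pos₁ st₁ m) + t % l < l := by
  rcases (machineQueue seq h (t / l) pos₁ st₁ m).eq_empty_or_nonempty with hempty | ⟨j, hj⟩
  · rw [hempty, card_empty, zero_add]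
    exact Nat.mod_lt t hl
  · have hle := step.card_machineQueue_pushed_add_le htrack hj
    have hlt := step.card_machineQueue_lt ⟨j, step.machineQueue_subset m hj⟩
      (le_of_add_le_left hle)
    exact (Nat.add_lt_add_right hlt _).trans_le hle

theorem isOnTrack_succ (step : IsGreedyStep seq h l t pushed work pos st pos₁ st₁)
    (hl : 0 < l) (htrack : IsOnTrack seq h l t pos st) :
    IsOnTrack seq h l (t + 1) pos₁ st₁ := by
  have hbehind := step.noLiveBehind htrack.noLiveBehind
  have hcard := step.card_machineQueue_add_lt hl htrack
  by_cases hdvd : l ∣ t + 1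
  · have hend : l ≤ t % l + 1 := by
      refine Nat.le_of_dvd (Nat.succ_pos _) ?_
      rwa [Nat.dvd_iff_mod_eq_zero, Nat.mod_add_mod, ← Nat.dvd_iff_mod_eq_zero]
    have hempty (m : M) : machineQueue seq h (t / l) pos₁ st₁ m = ∅ := by
      have := hcard m
      exact card_eq_zero.1 (by omega)
    refine ⟨?_, fun hmod => absurd (Nat.mod_eq_zero_of_dvd hdvd) hmod⟩
    rw [Nat.succ_div_of_dvd hdvd]
    exact hbehind.succ hempty
  · have hmod : (t + 1) % l ≤ t % l + 1 := by
      rw [← Nat.mod_add_mod]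
      exact Nat.mod_le _ _
    have hdiv : (t + 1) / l = t / l := Nat.succ_div_of_not_dvd hdvd
    refine ⟨hdiv ▸ hbehind, fun _ m => ?_⟩
    rw [hdiv]
    exact (Nat.add_le_add_left hmod _).trans (hcard m)

end IsGreedyStep

end

section

variable {seq : J → List M} {h : J → ℕ} {l tmax : ℕ} {pos : ℕ → J → ℕ} {st : ℕ → J → Fin 2}

theorem isOnTrack_of_isGreedyStep (hl : 0 < l)
    (hstep : ∀ t < tmax, ∃ pushed work,
      IsGreedyStep seq h l t pushed work (pos t) (st t) (pos (t + 1)) (st (t + 1)))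
    {t : ℕ} (ht : t ≤ tmax) : IsOnTrack seq h l t (pos t) (st t) := by
  induction t with
  | zero => exact ⟨fun _ _ _ => by simp, fun hmod => absurd (Nat.zero_mod l) hmod⟩
  | succ t ih =>
    obtain ⟨_, _, step⟩ := hstep t ht
    exact step.isOnTrack_succ hl (ih (Nat.le_of_succ_le ht))

theorem live_of_live_of_le
    (hstep : ∀ t < tmax, ∃ pushed work,
      IsGreedyStep seq h l t pushed work (pos t) (st t) (pos (t + 1)) (st (t + 1)))
    {t' t : ℕ} (ht't : t' ≤ t) (ht : t ≤ tmax) {j : J} (hlive : st t j = 0) : st t' j = 0 := by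
  induction t, ht't using Nat.le_induction with
  | base => exact hlive
  | succ t _ ih =>
    obtain ⟨_, _, step⟩ := hstep t ht
    exact ih (Nat.le_of_succ_le ht) (step.live_of_live hlive)

theorem behind_schedule_eliminated_general (hl : 0 < l)
    (hstep : ∀ t < tmax, ∃ pushed work,
      IsGreedyStep seq h l t pushed work (pos t) (st t) (pos (t + 1)) (st (t + 1)))
    {t' t : ℕ} (ht't : t' ≤ t) (ht : t ≤ tmax) {j : J} (hpos : pos t' j < (seq j).length)
    (hbehind : h j + pos t' j < t' / l) : st t j = 1 := by
  refine Fin.eq_one_of_ne_zero _ fun hlive => hbehind.not_ge ?_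
  exact (isOnTrack_of_isGreedyStep hl hstep (ht't.trans ht)).noLiveBehind j
    (live_of_live_of_le hstep ht't ht hlive) hpos

end

theorem IsGreedyExec.exists_isGreedyStep [Fintype M] {seq : J → List M} {L l : ℕ} {h : J → Fin L}
    {tmax : ℕ} {pos : ℕ → J → ℕ} {st : ℕ → J → Fin 2} (hexec : IsGreedyExec seq l h tmax pos st)
    (t : ℕ) (ht : t < tmax) :
    ∃ pushed work, IsGreedyStep seq (fun j => (h j : ℕ)) l t pushed work
      (pos t) (st t) (pos (t + 1)) (st (t + 1)) := by
  obtain ⟨pushed, hpushed, work, hmem, hsome, hwork, hnotWork, hdrop, hnotDrop⟩ := hexec.2.2 t ht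
  exact ⟨pushed, work, hpushed, hmem, hsome, hwork, hnotWork, hdrop, hnotDrop⟩

end

/-- In any greedy weak-scheduler execution up to time `tmax`, for all times
`t' ≤ t ≤ tmax` and every job `j`: if `j` is behind schedule at time `t'` (that is,
`pos_{t'}(j) < len(j)` and `h(j) + pos_{t'}(j) < ⌊t'/l⌋`), then `j` is eliminated at
time `t` (`st t j = 1`). -/
theorem behind_schedule_eliminated {M J : Type*} [Fintype M] [DecidableEq M] [Fintype J]
    (seq : J → List M) (L l : ℕ) (hL0 : 0 < L) (hl0 : 0 < l) (h : J → Fin L)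
    (tmax : ℕ) (pos : ℕ → J → ℕ) (st : ℕ → J → Fin 2)
    (hexec : IsGreedyExec seq l h tmax pos st)
    (t' t : ℕ) (ht't : t' ≤ t) (ht : t ≤ tmax) (j : J)
    (hpos : pos t' j < (seq j).length)
    (hbehind : (h j : ℕ) + pos t' j < t' / l) :
    st t j = 1 :=
  behind_schedule_eliminated_general hl0 hexec.exists_isGreedyStep ht't ht hpos hbehind
end
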